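/- arXiv:2605.25444 — 9 statements merged into one kernel-verified Lean document; each statement's English description precedes it below -/
import Mathlib

section
/- There exists n₀ such that for every odd n ≥ n₀ the following holds: there exist families of permutations π_j, ρ_j of Fin n indexed by j : Fin ((n−1)/2) such that (a) for all j and i: π_j i ≠ i, ρ_j i ≠ i, and π_j i ≠ ρ_j i; (b) for every pair (i, k) with k ≠ i there is exactly one occurrence of k among the values π_1 i, …, π_{(n−1)/2} i, ρ_1 i, …, ρ_{(n−1)/2} i (so the 2-factors F_j with edge sets {(i, π_j i)} ∪ {(i, ρ_j i)} decompose K_{n,n} minus the diagonal matching); and (c) for every j, the cycle type of the permutation (ρ_j)⁻¹ ∘ π_j is {2, 2, …, 2, 3} with (n−3)/2 twos when n ≡ 3 (mod 4), and {2, 2, …, 2, 5} with (n−5)/2 twos when n ≡ 1 (mod 4). Equivalently, K_{n,n} minus a perfect matching decomposes into (n−1)/2 spanning 2-factors, each isomorphic to ((n−3)/2)·C₄ ∪ C₆ when n ≡ 3 (mod 4) and to ((n−5)/2)·C₄ ∪ C₁₀ when n ≡ 1 (mod 4). -/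
namespace Crown
variable {I B K : Type} [DecidableEq I] [DecidableEq B] [Fintype I] [Fintype B]

/-- The permutation acting as `Q` on the block `s` together with the extra point and as `q` inside
every other block. -/
def blk (s : I) (Q : Equiv.Perm (Option B)) (q : Equiv.Perm B) : Option (I × B) → Option (I × B)
  | none => (Q none).map (fun b => (s, b))
  | some (a, b) => if a = s then (Q (some b)).map (fun b => (s, b)) else some (a, q b)

lemma blk_comp (s : I) (Q Q' : Equiv.Perm (Option B)) (q q' : Equiv.Perm B) (x) :
    blk s Q q (blk s Q' q' x) = blk s (Q * Q') (q * q') x := by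
  rcases x with _ | ⟨a, b⟩
  · simp only [blk]
    rcases h : Q' none with _ | b <;> simp [blk, h]
  · simp only [blk]
    by_cases has : a = s
    · subst has
      rcases h : Q' (some b) with _ | b <;> simp [blk, h]
    · simp [has, blk]

lemma blk_one (s : I) (x : Option (I × B)) :
    blk s 1 1 x = x := by
  rcases x with _ | ⟨a, b⟩
  · simp [blk]
  · by_cases has : a = s <;> simp [blk, has]

def blkP (s : I) (Q : Equiv.Perm (Option B)) (q : Equiv.Perm B) : Equiv.Perm (Option (I × B)) where
  toFun := blk s Q q
  invFun := blk s Q⁻¹ q⁻¹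
  left_inv x := by rw [blk_comp]; simp [blk_one]
  right_inv x := by rw [blk_comp]; simp [blk_one]

lemma blkP_mul (s : I) (Q Q' : Equiv.Perm (Option B)) (q q' : Equiv.Perm B) :
    blkP s Q q * blkP s Q' q' = blkP s (Q * Q') (q * q') := by
  ext1 x; exact blk_comp ..

lemma blkP_inv (s : I) (Q : Equiv.Perm (Option B)) (q : Equiv.Perm B) :
    (blkP s Q q)⁻¹ = blkP s Q⁻¹ q⁻¹ := rfl

def emb (s : I) : Option B ↪ Option (I × B) :=
  ⟨Option.map (fun b => (s, b)), Option.map_injective (fun _ _ h => (Prod.mk.inj h).2)⟩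

lemma cycleType_left (s : I) (Q : Equiv.Perm (Option B)) :
    (blkP s Q 1).cycleType = Q.cycleType := by
  have : blkP s Q 1 = Q.viaFintypeEmbedding (emb s) := by
    ext1 x
    by_cases hx : x ∈ Set.range (emb s)
    · obtain ⟨y, rfl⟩ := hx
      rw [Equiv.Perm.viaFintypeEmbedding_apply_image]
      rcases y with _ | b <;> simp [emb, blkP, blk]
    · rw [Equiv.Perm.viaFintypeEmbedding_apply_notMem_range _ _ hx]
      rcases x with _ | ⟨a, b⟩
      · exact absurd ⟨none, rfl⟩ hx
      · have : a ≠ s := by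
          rintro rfl
          exact hx ⟨some b, rfl⟩
        simp [blkP, blk, this]
  rw [this]
  exact Equiv.Perm.cycleType_extendDomain _

lemma cycleType_right (s : I) (q : Equiv.Perm B) (h2 : q ^ 2 = 1) (hq : ∀ b, q b ≠ b) :
    (blkP s 1 q).cycleType =
      Multiset.replicate ((Fintype.card I - 1) * Fintype.card B / 2) 2 := by
  have hs : (blkP s 1 q).support = 
      ((Finset.univ.erase s) ×ˢ (Finset.univ : Finset B)).map Function.Embedding.some := by
    ext x
    rcases x with _ | ⟨a, b⟩
    · simp [blkP, blk]
    · by_cases has : a = s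
      · simp [blkP, blk, has]
      · simp [blkP, blk, has, hq]
  have h1 : (blkP s 1 q) ^ 2 = 1 := by
    rw [pow_two, blkP_mul, mul_one, ← pow_two q, h2]
    ext1 x
    exact blk_one s x
  haveI : Fact (Nat.Prime 2) := ⟨Nat.prime_two⟩
  have h3 := Equiv.Perm.pow_prime_eq_one_iff.1 h1
  have h4 := Multiset.eq_replicate_card.2 h3
  have h5 := Equiv.Perm.sum_cycleType (blkP s 1 q)
  rw [hs, h4] at h5
  simp at h5
  rw [h4]
  congr 1
  simp [← h5]

lemma cycleType_blkP (s : I) (Q : Equiv.Perm (Option B)) (q : Equiv.Perm B)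
    (h2 : q ^ 2 = 1) (hq : ∀ b, q b ≠ b) :
    (blkP s Q q).cycleType =
      Multiset.replicate ((Fintype.card I - 1) * Fintype.card B / 2) 2 + Q.cycleType := by
  have : blkP s Q q = blkP s 1 q * blkP s Q 1 := by simp [blkP_mul]
  rw [this, Equiv.Perm.Disjoint.cycleType_mul, cycleType_left, cycleType_right s q h2 hq]
  intro x
  rcases x with _ | ⟨a, b⟩
  · left; simp [blkP, blk]
  · by_cases has : a = s
    · left; simp [blkP, blk, has]
    · right; simp [blkP, blk, has]

def lft (τ : Equiv.Perm I) : Equiv.Perm (Option (I × B)) :=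
  Equiv.optionCongr (Equiv.prodCongr τ (Equiv.refl B))

/-- Main factor. -/
def phi (σ : I → Equiv.Perm I) (W : K → Equiv.Perm (Option B)) (w : K → Equiv.Perm B)
    (s : I) (κ : K) : Equiv.Perm (Option (I × B)) := lft (σ s) * blkP s (W κ) (w κ)

lemma phi_none (σ : I → Equiv.Perm I) (W : K → Equiv.Perm (Option B)) (w : K → Equiv.Perm B)
    (hσ : ∀ s, σ s s = s) (s : I) (κ : K) :
    phi σ W w s κ none = (W κ none).map (fun b => (s, b)) := by
  rcases h : W κ none with _ | b <;> simp [phi, lft, blkP, blk, h, hσ]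

lemma phi_some_self (σ : I → Equiv.Perm I) (W : K → Equiv.Perm (Option B)) (w : K → Equiv.Perm B)
    (hσ : ∀ s, σ s s = s) (s : I) (κ : K) (b : B) :
    phi σ W w s κ (some (s, b)) = (W κ (some b)).map (fun b => (s, b)) := by
  rcases h : W κ (some b) with _ | b <;> simp [phi, lft, blkP, blk, h, hσ]

lemma phi_some_ne (σ : I → Equiv.Perm I) (W : K → Equiv.Perm (Option B)) (w : K → Equiv.Perm B)
    (s : I) (κ : K) (a : I) (b : B) (h : a ≠ s) :
    phi σ W w s κ (some (a, b)) = some (σ s a, w κ b) := by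
  simp [phi, lft, blkP, blk, h]

lemma phi_ne (σ : I → Equiv.Perm I) (W : K → Equiv.Perm (Option B)) (w : K → Equiv.Perm B)
    (hσ : ∀ s, σ s s = s) (hL : ∀ a b, ∃! s, σ s a = b) (hW : ∀ κ x, W κ x ≠ x)
    (s : I) (κ : K) (x) : phi σ W w s κ x ≠ x := by
  rcases x with _ | ⟨a, b⟩
  · rw [phi_none _ _ _ hσ]
    simpa using hW κ none
  · by_cases has : a = s
    · subst has
      rw [phi_some_self _ _ _ hσ]
      have := hW κ (some b)
      intro h
      rcases h' : W κ (some b) with _ | b' <;> simp [h'] at h this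
      exact this h
    · rw [phi_some_ne _ _ _ _ _ _ _ has]
      intro h
      simp at h
      exact has ((hL a a).unique (hσ a) h.1)

lemma phi_latin (σ : I → Equiv.Perm I) (W : K → Equiv.Perm (Option B)) (w : K → Equiv.Perm B)
    (hσ : ∀ s, σ s s = s) (hL : ∀ a b, ∃! s, σ s a = b) 
    (hWL : ∀ x y, y ≠ x → ∃! κ, W κ x = y) (hwL : ∀ x y, ∃! κ, w κ x = y)
    (x y : Option (I × B)) (hxy : y ≠ x) : ∃! j : I × K, phi σ W w j.1 j.2 x = y := by
  rcases x with _ | ⟨a, b⟩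
  · rcases y with _ | ⟨c, d⟩
    · exact absurd rfl hxy
    · obtain ⟨κ, h, hu⟩ := hWL none (some d) (by simp)
      refine ⟨(c, κ), ?_, ?_⟩
      · simp [phi_none _ _ _ hσ, h]
      · rintro ⟨s, κ'⟩ h'
        simp [phi_none _ _ _ hσ] at h'
        obtain ⟨h1, rfl⟩ := h'
        rw [hu κ' h1]
  · rcases y with _ | ⟨c, d⟩
    · obtain ⟨κ, h, hu⟩ := hWL (some b) none (by simp)
      refine ⟨(a, κ), ?_, ?_⟩
      · simp [phi_some_self _ _ _ hσ, h]
      · rintro ⟨s, κ'⟩ h'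
        by_cases has : a = s
        · subst has
          simp [phi_some_self _ _ _ hσ] at h'
          rw [hu κ' h']
        · simp [phi_some_ne _ _ _ _ _ _ _ has] at h'
    · by_cases hac : a = c
      · subst hac
        have hbd : d ≠ b := by rintro rfl; exact hxy rfl
        obtain ⟨κ, h, hu⟩ := hWL (some b) (some d) (by simpa using hbd)
        refine ⟨(a, κ), ?_, ?_⟩
        · simp [phi_some_self _ _ _ hσ, h]
        · rintro ⟨s, κ'⟩ h'
          by_cases has : a = s
          · subst has
            simp [phi_some_self _ _ _ hσ] at h'
            rw [hu κ' h']
          · simp [phi_some_ne _ _ _ _ _ _ _ has] at h'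
            exact absurd ((hL a a).unique (hσ a) h'.1) has
      · obtain ⟨s, hs, hsu⟩ := hL a c
        obtain ⟨κ, h, hu⟩ := hwL b d
        have has : a ≠ s := by
          rintro rfl
          exact hac ((hσ a).symm.trans hs)
        refine ⟨(s, κ), ?_, ?_⟩
        · simp [phi_some_ne _ _ _ _ _ _ _ has, h, hs]
        · rintro ⟨s', κ'⟩ h'
          by_cases has' : a = s'
          · subst has'
            simp [phi_some_self _ _ _ hσ] at h'
            exact absurd h'.2 hac
          · simp [phi_some_ne _ _ _ _ _ _ _ has'] at h'
            rw [hsu s' h'.1, hu κ' h'.2]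

lemma phi_cycle (σ : I → Equiv.Perm I) (W : K → Equiv.Perm (Option B)) (w : K → Equiv.Perm B)
    (s : I) (κ κ' : K) (h2 : ((w κ')⁻¹ * w κ) ^ 2 = 1) (hq : ∀ b, ((w κ')⁻¹ * w κ) b ≠ b) :
    ((phi σ W w s κ')⁻¹ * phi σ W w s κ).cycleType =
      Multiset.replicate ((Fintype.card I - 1) * Fintype.card B / 2) 2
        + ((W κ')⁻¹ * W κ).cycleType := by
  rw [← cycleType_blkP s _ _ h2 hq]
  congr 1
  simp only [phi, mul_inv_rev, blkP_inv, ← blkP_mul]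
  group

/-- Idempotent Latin squares. -/
lemma exists_idem (k : ℕ) (hk : 3 ≤ k) : ∃ (I : Type) (_ : DecidableEq I) (_ : Fintype I)
    (σ : I → Equiv.Perm I), Fintype.card I = k ∧ (∀ s, σ s s = s) ∧
      (∀ a b, ∃! s, σ s a = b) := by
  have key : ∀ q : ℕ, Odd q → ∀ a b : ZMod q, 2 * a = 2 * b → a = b := by
    intro q hq a b h
    have hu : IsUnit (2 : ZMod q) := by
      have := (ZMod.isUnit_iff_coprime 2 q).2 (Nat.coprime_two_left.2 hq)
      simpa using this
    exact hu.mul_left_cancel h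
  rcases Nat.even_or_odd k with he | ho
  · obtain ⟨q, rfl⟩ : ∃ q, k = q + 1 := ⟨k - 1, by omega⟩
    have hq : Odd q := by
      rcases Nat.even_or_odd q with h | h
      · exact absurd he (by simpa [Nat.even_add_one] using h)
      · exact h
    haveI : NeZero q := ⟨by omega⟩
    haveI : Fact (1 < q) := ⟨by omega⟩
    let f : Option (ZMod q) → Option (ZMod q) → Option (ZMod q) := fun s x =>
      match s, x with
      | none, none => none
      | none, some a => some (a + 1)
      | some s, none => some (s + 2)
      | some s, some a => if a = s + 1 then none else some (2 * a - s)
    have hinj : ∀ s, Function.Injective (f s) := by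
      intro s x y h
      rcases s with _ | s <;> rcases x with _ | x <;> rcases y with _ | y
      · rfl
      · simp [f] at h
      · simp [f] at h
      · simpa [f] using h
      · rfl
      · simp only [f] at h
        split_ifs at h with h1
        simp only [Option.some.injEq] at h
        exact absurd (key q hq y (s + 1) (by linear_combination -h)) h1
      · simp only [f] at h
        split_ifs at h with h1
        simp only [Option.some.injEq] at h
        exact absurd (key q hq x (s + 1) (by linear_combination h)) h1
      · simp only [f] at h
        by_cases h1 : x = s + 1 <;> by_cases h2 : y = s + 1
        · rw [h1, h2]
        · simp [h1, h2] at h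
        · simp [h1, h2] at h
        · simp only [h1, h2, if_false, Option.some.injEq] at h
          exact congrArg some (key q hq x y (by linear_combination h))
    refine ⟨Option (ZMod q), inferInstance, inferInstance,
      fun s => Equiv.ofBijective (f s) (Finite.injective_iff_bijective.1 (hinj s)), ?_, ?_, ?_⟩
    · simp [ZMod.card]
    · intro s
      rcases s with _ | s
      · rfl
      · simp [f]; ring
    · intro a b
      simp only [Equiv.ofBijective_apply]
      rcases a with _ | a <;> rcases b with _ | b
      · refine ⟨none, rfl, ?_⟩
        rintro (_ | s) h <;> simp [f] at h ⊢
      · refine ⟨some (b - 2), by simp [f], ?_⟩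
        rintro (_ | s) h <;> simp [f] at h ⊢
        rw [← h]; ring
      · refine ⟨some (a - 1), by simp [f], ?_⟩
        rintro (_ | s) h <;> simp [f] at h ⊢
        rw [h]; ring
      · by_cases hab : b = a + 1
        · refine ⟨none, by simp [f, hab], ?_⟩
          rintro (_ | s) h <;> simp [f] at h ⊢
          exact h.1 (by linear_combination hab + h.2)
        · refine ⟨some (2 * a - b), ?_, ?_⟩
          · have : ¬ (a = 2 * a - b + 1) := fun h => hab (by linear_combination h)
            simp [f, this]
          · rintro (_ | s) h <;> simp [f] at h ⊢
            · exact hab h.symm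
            · linear_combination -h.2
  · haveI : NeZero k := ⟨by omega⟩
    refine ⟨ZMod k, inferInstance, inferInstance,
      fun s => Equiv.ofBijective (fun a => 2 * a - s) (Finite.injective_iff_bijective.1 ?_),
        ?_, ?_, ?_⟩
    · intro a b h
      exact key k ho a b (by simpa using h)
    · simp [ZMod.card]
    · intro s; simp; ring
    · intro a b
      refine ⟨2 * a - b, by simp, ?_⟩
      intro s h
      simp at h
      rw [← h]; ring

lemma cycleType_permCongr' {X Y : Type} [Fintype X] [DecidableEq X] [Fintype Y] [DecidableEq Y]
    (e : X ≃ Y) (τ : Equiv.Perm X) : (e.permCongr τ).cycleType = τ.cycleType := by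
  have : e.permCongr τ = τ.viaFintypeEmbedding e.toEmbedding := by
    ext1 y
    obtain ⟨x, rfl⟩ := e.surjective y
    have := Equiv.Perm.viaFintypeEmbedding_apply_image τ e.toEmbedding x
    simp only [Equiv.coe_toEmbedding] at this
    simp [this]
  rw [this]
  exact Equiv.Perm.cycleType_extendDomain _

lemma transport {J X : Type} [Fintype J] [DecidableEq J] [Fintype X] [DecidableEq X] (n : ℕ)
    (hJ : Fintype.card J = (n - 1) / 2) (hX : Fintype.card X = n)
    (Φ : J → Bool → Equiv.Perm X) (h1 : ∀ j b x, Φ j b x ≠ x)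
    (h2 : ∀ x y, y ≠ x → ∃! jb : J × Bool, Φ jb.1 jb.2 x = y) (ct : Multiset ℕ)
    (h3 : ∀ j, ((Φ j false)⁻¹ * Φ j true).cycleType = ct) :
    ∃ π ρ : Fin ((n - 1) / 2) → Equiv.Perm (Fin n),
      (∀ j i, π j i ≠ i ∧ ρ j i ≠ i ∧ π j i ≠ ρ j i) ∧
      (∀ i k : Fin n, k ≠ i →
        ∃! jb : Fin ((n - 1) / 2) × Bool,
          (if jb.2 then π jb.1 i else ρ jb.1 i) = k) ∧
      (∀ j, ((ρ j)⁻¹ * π j).cycleType = ct) := by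
  let e := Fintype.equivFinOfCardEq hX
  let g := (Fintype.equivFinOfCardEq hJ).symm
  refine ⟨fun j => e.permCongr (Φ (g j) true), fun j => e.permCongr (Φ (g j) false), ?_, ?_, ?_⟩
  · intro j i
    have hh : ∀ b, e (Φ (g j) b (e.symm i)) ≠ i := fun b h =>
      h1 (g j) b (e.symm i) ((Equiv.eq_symm_apply e).2 h)
    refine ⟨by simpa using hh true, by simpa using hh false, ?_⟩
    intro h
    simp only [Equiv.permCongr_apply, EmbeddingLike.apply_eq_iff_eq] at h
    have := (h2 (e.symm i) _ (h1 (g j) false (e.symm i))).unique (y₁ := (g j, true))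
      (y₂ := (g j, false)) h rfl
    simp at this
  · intro i k hk
    obtain ⟨⟨j, b⟩, h, hu⟩ := h2 (e.symm i) (e.symm k) (by simpa using hk)
    have hval : ∀ jb : Fin ((n - 1) / 2) × Bool,
        ((if jb.2 then e.permCongr (Φ (g jb.1) true) i else e.permCongr (Φ (g jb.1) false) i) = k)
          ↔ Φ (g jb.1) jb.2 (e.symm i) = e.symm k := by
      rintro ⟨j, b⟩
      cases b <;> simp [Equiv.eq_symm_apply]
    simp only [hval]
    refine ⟨(g.symm j, b), by simpa using h, ?_⟩
    rintro ⟨j', b'⟩ h'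
    have := hu (g j', b') h'
    simp only [Prod.mk.injEq] at this ⊢
    exact ⟨by rw [← this.1]; simp, this.2⟩
  · intro j
    rw [← h3 (g j)]
    have : (e.permCongr (Φ (g j) false))⁻¹ * e.permCongr (Φ (g j) true)
        = e.permCongr ((Φ (g j) false)⁻¹ * Φ (g j) true) := by
      rw [inv_mul_eq_iff_eq_mul]
      ext1 x; simp
    rw [this]
    exact cycleType_permCongr' e _

lemma assemble {E : Type} [Fintype E] [DecidableEq E] (n k c : ℕ) (hk : 3 ≤ k)
    (hn : n = k * Fintype.card B + 1) (hE : Fintype.card B = 2 * Fintype.card E)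
    (W : E × Bool → Equiv.Perm (Option B)) (w : E × Bool → Equiv.Perm B)
    (hW : ∀ κ x, W κ x ≠ x)
    (hWL : ∀ x y, y ≠ x → ∃! κ, W κ x = y) (hwL : ∀ x y, ∃! κ, w κ x = y)
    (h2 : ∀ e, ((w (e, false))⁻¹ * w (e, true)) ^ 2 = 1)
    (hq : ∀ e b, ((w (e, false))⁻¹ * w (e, true)) b ≠ b)
    (hc : ∀ e, ((W (e, false))⁻¹ * W (e, true)).cycleType = {c}) :
    ∃ π ρ : Fin ((n - 1) / 2) → Equiv.Perm (Fin n),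
      (∀ j i, π j i ≠ i ∧ ρ j i ≠ i ∧ π j i ≠ ρ j i) ∧
      (∀ i k : Fin n, k ≠ i →
        ∃! jb : Fin ((n - 1) / 2) × Bool,
          (if jb.2 then π jb.1 i else ρ jb.1 i) = k) ∧
      (∀ j, ((ρ j)⁻¹ * π j).cycleType =
        Multiset.replicate ((k - 1) * Fintype.card B / 2) 2 + {c}) := by
  obtain ⟨I, _, _, σ, hI, hσ, hL⟩ := exists_idem k hk
  refine transport (J := I × E) (X := Option (I × B)) n ?_ ?_
    (fun j b => phi σ W w j.1 (j.2, b)) ?_ ?_ _ ?_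
  · simp only [Fintype.card_prod, hI, hn, hE, Nat.add_sub_cancel]
    rw [mul_left_comm, Nat.mul_div_cancel_left _ (by norm_num)]
  · simp [hI, hn]
  · intro j b x
    exact phi_ne σ W w hσ hL hW _ _ _
  · intro x y hxy
    obtain ⟨⟨s, e, b⟩, h, hu⟩ := phi_latin σ W w hσ hL hWL hwL x y hxy
    refine ⟨((s, e), b), h, ?_⟩
    rintro ⟨⟨s', e'⟩, b'⟩ h'
    have := hu (s', e', b') h'
    simp only [Prod.mk.injEq] at this ⊢
    tauto
  · rintro ⟨s, e⟩
    rw [phi_cycle σ W w s (e, true) (e, false) (h2 e) (hq e), hI, hc]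

def rot (m : ℕ) : Equiv.Perm (Option (Fin m)) :=
  (finSuccEquiv m).permCongr (finRotate (m + 1))

lemma case3 (n : ℕ) (hn : 7 ≤ n) (h : n % 4 = 3) :
    ∃ π ρ : Fin ((n - 1) / 2) → Equiv.Perm (Fin n),
      (∀ j i, π j i ≠ i ∧ ρ j i ≠ i ∧ π j i ≠ ρ j i) ∧
      (∀ i k : Fin n, k ≠ i →
        ∃! jb : Fin ((n - 1) / 2) × Bool,
          (if jb.2 then π jb.1 i else ρ jb.1 i) = k) ∧
      (∀ j, ((ρ j)⁻¹ * π j).cycleType = Multiset.replicate ((n - 3) / 2) 2 + {3}) := by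
  have := assemble (B := Fin 2) (E := Fin 1) n ((n - 1) / 2) 3 (by omega) (by simp; omega) (by simp)
    (fun κ => rot 2 ^ (if κ.2 then 2 else 1)) (fun κ => finRotate 2 ^ (if κ.2 then 1 else 0))
    (by decide) (by unfold ExistsUnique; decide) (by unfold ExistsUnique; decide)
    (by decide) (by decide) ?_
  · have hcard : ((n - 1) / 2 - 1) * Fintype.card (Fin 2) / 2 = (n - 3) / 2 := by
      rw [Fintype.card_fin]; omega
    rw [hcard] at this
    exact this
  · intro e
    have h' : ∀ e : Fin 1, ((fun κ : Fin 1 × Bool => rot 2 ^ (if κ.2 then 2 else 1)) (e, false))⁻¹ *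
        (fun κ : Fin 1 × Bool => rot 2 ^ (if κ.2 then 2 else 1)) (e, true) = rot 2 := by decide
    rw [h' e]
    exact (cycleType_permCongr' _ _).trans cycleType_finRotate

lemma case1 (n : ℕ) (hn : 13 ≤ n) (h : n % 4 = 1) :
    ∃ π ρ : Fin ((n - 1) / 2) → Equiv.Perm (Fin n),
      (∀ j i, π j i ≠ i ∧ ρ j i ≠ i ∧ π j i ≠ ρ j i) ∧
      (∀ i k : Fin n, k ≠ i →
        ∃! jb : Fin ((n - 1) / 2) × Bool,
          (if jb.2 then π jb.1 i else ρ jb.1 i) = k) ∧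
      (∀ j, ((ρ j)⁻¹ * π j).cycleType = Multiset.replicate ((n - 5) / 2) 2 + {5}) := by
  have := assemble (B := Fin 4) (E := Fin 2) n ((n - 1) / 4) 5 (by omega) (by simp; omega) (by simp)
    (fun κ => rot 4 ^ (2 * κ.1.val + (if κ.2 then 2 else 1)))
    (fun κ => finRotate 4 ^ (κ.1.val + (if κ.2 then 2 else 0)))
    (by decide) (by unfold ExistsUnique; decide) (by unfold ExistsUnique; decide)
    (by decide) (by decide) ?_
  · have hcard : ((n - 1) / 4 - 1) * Fintype.card (Fin 4) / 2 = (n - 5) / 2 := by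
      rw [Fintype.card_fin]; omega
    rw [hcard] at this
    exact this
  · intro e
    have h' : ∀ e : Fin 2, ((fun κ : Fin 2 × Bool =>
        rot 4 ^ (2 * κ.1.val + (if κ.2 then 2 else 1))) (e, false))⁻¹ *
        (fun κ : Fin 2 × Bool => rot 4 ^ (2 * κ.1.val + (if κ.2 then 2 else 1))) (e, true)
          = rot 4 := by decide
    rw [h' e]
    exact (cycleType_permCongr' _ _).trans cycleType_finRotate

end Crown

theorem crown_two_factorization :
    ∃ n₀ : ℕ, ∀ n : ℕ, n₀ ≤ n → Odd n →
    ∃ π ρ : Fin ((n - 1) / 2) → Equiv.Perm (Fin n),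
      (∀ j i, π j i ≠ i ∧ ρ j i ≠ i ∧ π j i ≠ ρ j i) ∧
      (∀ i k : Fin n, k ≠ i →
        ∃! jb : Fin ((n - 1) / 2) × Bool,
          (if jb.2 then π jb.1 i else ρ jb.1 i) = k) ∧
      (∀ j, ((ρ j)⁻¹ * π j).cycleType =
        if n % 4 = 3 then Multiset.replicate ((n - 3) / 2) 2 + {3}
        else Multiset.replicate ((n - 5) / 2) 2 + {5}) := by
  refine ⟨13, fun n hn ho => ?_⟩
  by_cases h : n % 4 = 3
  · simp only [h, if_true]
    exact Crown.case3 n (by omega) h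
  · simp only [h, if_false]
    exact Crown.case1 n hn (by rcases ho with ⟨m, rfl⟩; omega)
end

section
/- Let n ≥ 1, let M be a signing of K_{n,n}, and let η > 0 be real. If s(M) ≥ η·n⁴, then there exists a permutation π of Fin n with |∑ i, M i (π i)| ≥ η·n/2; that is, K_{n,n} contains a perfect matching of discrepancy at least η/2. -/
open Finset

/-- `M` is a signing of `K_{n,n}`: every entry is `+1` or `-1`. -/
def IsSigning (n : ℕ) (M : Fin n → Fin n → ℤ) : Prop :=
  ∀ i j, M i j = 1 ∨ M i j = -1

/-- `s(M)`: the number of switchers of `M`. -/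
def switcherCount (n : ℕ) (M : Fin n → Fin n → ℤ) : ℕ :=
  (univ.filter fun p : Fin n × Fin n × Fin n × Fin n =>
    p.1 < p.2.1 ∧ p.2.2.1 < p.2.2.2 ∧
      M p.1 p.2.2.1 + M p.2.1 p.2.2.2 ≠ M p.1 p.2.2.2 + M p.2.1 p.2.2.1).card

def ltPairs (n : ℕ) : Finset (Fin n × Fin n) := univ.filter fun p => p.1 < p.2

def hitPairs (n : ℕ) (R : Finset (Fin n)) : Finset (Fin n × Fin n) :=
  univ.filter fun p => p.1 < p.2 ∧ (p.1 ∈ R ∨ p.2 ∈ R)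

lemma two_mul_card_ltPairs (n : ℕ) : 2 * (ltPairs n).card ≤ n ^ 2 := by
  have h1 : ((ltPairs n).image Prod.swap).card = (ltPairs n).card :=
    card_image_of_injective _ Prod.swap_injective
  have h2 : Disjoint (ltPairs n) ((ltPairs n).image Prod.swap) := by
    rw [Finset.disjoint_left]
    rintro ⟨x, y⟩ h h'
    simp only [ltPairs, mem_filter, mem_univ, true_and, mem_image, Prod.exists,
      Prod.swap_prod_mk, Prod.mk.injEq] at h h'
    obtain ⟨u, v, huv, rfl, rfl⟩ := h'
    exact absurd h (lt_asymm huv)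
  have h3 := card_le_univ (ltPairs n ∪ (ltPairs n).image Prod.swap)
  rw [card_union_of_disjoint h2, h1] at h3
  simp only [Fintype.card_prod, Fintype.card_fin] at h3
  nlinarith

lemma card_hitPairs (n : ℕ) (R : Finset (Fin n)) : (hitPairs n R).card ≤ R.card * n := by
  have h : hitPairs n R ⊆ R.biUnion fun r =>
      univ.filter fun p : Fin n × Fin n => p.1 < p.2 ∧ (p.1 = r ∨ p.2 = r) := by
    rintro ⟨x, y⟩ h
    simp only [hitPairs, mem_filter, mem_univ, true_and, mem_biUnion] at h ⊢
    obtain ⟨hl, h | h⟩ := h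
    · exact ⟨x, h, hl, Or.inl rfl⟩
    · exact ⟨y, h, hl, Or.inr rfl⟩
  refine (card_le_card h).trans (card_biUnion_le_card_mul _ _ _ ?_)
  intro r _
  have := card_le_card_of_injOn (s := univ.filter fun p : Fin n × Fin n =>
      p.1 < p.2 ∧ (p.1 = r ∨ p.2 = r)) (t := (univ : Finset (Fin n)))
    (fun p => if p.1 = r then p.2 else p.1) (by simp) (by
      rintro ⟨x, y⟩ hp ⟨u, v⟩ hq
      simp only [coe_filter, mem_univ, true_and, Set.mem_setOf_eq] at hp hq
      simp only [Prod.mk.injEq]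
      split_ifs <;> grind)
  simpa using this

/-- Too many switchers: one of them avoids the rows `R` and the columns `C`. -/
lemma exists_switcher (n t : ℕ) (M : Fin n → Fin n → ℤ) (R C : Finset (Fin n))
    (hR : R.card ≤ 2 * t) (hC : C.card ≤ 2 * t) (hs : 2 * t * n ^ 3 < switcherCount n M) :
    ∃ a c b d, a < c ∧ b < d ∧ M a b + M c d ≠ M a d + M c b ∧
      a ∉ R ∧ c ∉ R ∧ b ∉ C ∧ d ∉ C := by
  by_contra hcon
  push Not at hcon
  have h : switcherCount n M ≤
      ((hitPairs n R ×ˢ ltPairs n) ∪ (ltPairs n ×ˢ hitPairs n C)).card := by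
    unfold switcherCount
    refine card_le_card_of_injOn (fun p => ((p.1, p.2.1), (p.2.2.1, p.2.2.2))) ?_ ?_
    · rintro ⟨a, c, b, d⟩ hp
      simp only [coe_filter, mem_univ, true_and, Set.mem_setOf_eq] at hp
      have := hcon a c b d hp.1 hp.2.1 hp.2.2
      simp only [hitPairs, ltPairs, mem_coe, mem_union, mem_product, mem_filter, mem_univ,
        true_and]
      tauto
    · rintro ⟨a, c, b, d⟩ _ ⟨a', c', b', d'⟩ _ h
      simp only [Prod.mk.injEq] at h ⊢
      tauto
  have h2 := card_union_le (hitPairs n R ×ˢ ltPairs n) (ltPairs n ×ˢ hitPairs n C)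
  rw [card_product, card_product] at h2
  have hL := two_mul_card_ltPairs n
  have h3 : (hitPairs n R).card ≤ 2 * t * n :=
    (card_hitPairs n R).trans (Nat.mul_le_mul_right _ hR)
  have h4 : (hitPairs n C).card ≤ 2 * t * n :=
    (card_hitPairs n C).trans (Nat.mul_le_mul_right _ hC)
  have h5 := Nat.mul_le_mul h3 hL
  have h6 := Nat.mul_le_mul h4 hL
  nlinarith

/-- Two perfect matchings that agree off at most `2t` rows, whose sums differ by `2t`. -/
def GoodPair (n : ℕ) (M : Fin n → Fin n → ℤ) (t : ℕ) : Prop :=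
  ∃ (R : Finset (Fin n)) (p q : Equiv.Perm (Fin n)), R.card ≤ 2 * t ∧
    (∀ i, i ∉ R → p i = q i) ∧ 2 * (t : ℤ) ≤ ∑ i, (M i (p i) - M i (q i))

lemma extend_pair (n t : ℕ) (M : Fin n → Fin n → ℤ) (R : Finset (Fin n))
    (p q : Equiv.Perm (Fin n)) (hR : R.card ≤ 2 * t) (hpq : ∀ i, i ∉ R → p i = q i)
    (hsum : 2 * (t : ℤ) ≤ ∑ i, (M i (p i) - M i (q i))) (a c b d : Fin n)
    (hac : a ≠ c) (hbd : b ≠ d) (ha : a ∉ R) (hc : c ∉ R)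
    (hb : b ∉ R.image p) (hd : d ∉ R.image p)
    (hsw : M a d + M c b + 2 ≤ M a b + M c d) : GoodPair n M (t + 1) := by
  have hq : ∀ i ∈ R, q i ∈ R.image p := by
    intro i hi
    refine mem_image.2 ⟨p.symm (q i), ?_, by simp⟩
    by_contra h
    have h1 := hpq _ h
    rw [Equiv.apply_symm_apply] at h1
    have := q.injective h1
    exact h (this ▸ hi)
  have hpa : p a ∉ R.image p := by simpa using ha
  have hpc : p c ∉ R.image p := by simpa using hc
  have hpac : p a ≠ p c := fun h => hac (p.injective h)
  obtain ⟨τ, hτa, hτc, hτ⟩ : ∃ τ : Equiv.Perm (Fin n), τ (p a) = b ∧ τ (p c) = d ∧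
      ∀ x ∈ R.image p, τ x = x := by
    refine ⟨(Equiv.swap (p a) b).trans (Equiv.swap (Equiv.swap (p a) b (p c)) d), ?_, ?_, ?_⟩
    · simp only [Equiv.trans_apply, Equiv.swap_apply_left]
      apply Equiv.swap_apply_of_ne_of_ne _ hbd
      intro h
      exact hpac ((Equiv.swap (p a) b).injective ((Equiv.swap_apply_left (p a) b).trans h))
    · simp
    · intro x hx
      have e1 : x ≠ p a := fun h => hpa (h ▸ hx)
      have e2 : x ≠ p c := fun h => hpc (h ▸ hx)
      have e3 : x ≠ b := fun h => hb (h ▸ hx)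
      have e4 : x ≠ d := fun h => hd (h ▸ hx)
      have e5 : Equiv.swap (p a) b x = x := Equiv.swap_apply_of_ne_of_ne e1 e3
      rw [Equiv.trans_apply, e5]
      apply Equiv.swap_apply_of_ne_of_ne _ e4
      intro h
      exact e2 ((Equiv.swap (p a) b).injective (e5.trans h))
  refine ⟨insert a (insert c R), p.trans τ, (Equiv.swap a c).trans (q.trans τ), ?_, ?_, ?_⟩
  · have := card_insert_le a (insert c R)
    have := card_insert_le c R
    omega
  · intro i hi
    simp only [mem_insert, not_or] at hi
    simp only [Equiv.trans_apply]
    rw [Equiv.swap_apply_of_ne_of_ne hi.1 hi.2.1, hpq i hi.2.2]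
  · have key : ∀ i, M i ((p.trans τ) i) - M i (((Equiv.swap a c).trans (q.trans τ)) i)
        = (M i (p i) - M i (q i)) + ((if i = a then M a b - M a d else 0)
          + (if i = c then M c d - M c b else 0)) := by
      intro i
      simp only [Equiv.trans_apply]
      by_cases h1 : i = a
      · subst h1
        rw [Equiv.swap_apply_left, ← hpq c hc, ← hpq i ha, hτa, hτc]
        simp [hac]
      by_cases h2 : i = c
      · subst h2
        rw [Equiv.swap_apply_right, ← hpq a ha, ← hpq i hc, hτa, hτc]
        simp [h1]
      rw [Equiv.swap_apply_of_ne_of_ne h1 h2]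
      by_cases h3 : i ∈ R
      · rw [hτ _ (mem_image_of_mem p h3), hτ _ (hq i h3)]
        simp [h1, h2]
      · rw [← hpq i h3]
        simp [h1, h2]
    rw [sum_congr rfl fun i _ => key i, sum_add_distrib, sum_add_distrib]
    simp only [sum_ite_eq', mem_univ, if_true]
    push_cast
    linarith

lemma goodPair_succ (n t : ℕ) (M : Fin n → Fin n → ℤ) (hM : IsSigning n M)
    (h : GoodPair n M t) (hs : 2 * t * n ^ 3 < switcherCount n M) : GoodPair n M (t + 1) := by
  obtain ⟨R, p, q, hR, hpq, hsum⟩ := h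
  obtain ⟨a, c, b, d, hac, hbd, hsw, ha, hc, hb, hd⟩ :=
    exists_switcher n t M R (R.image p) hR (card_image_le.trans hR) hs
  by_cases hlt : M a d + M c b + 2 ≤ M a b + M c d
  · exact extend_pair n t M R p q hR hpq hsum a c b d hac.ne hbd.ne ha hc hb hd hlt
  · refine extend_pair n t M R p q hR hpq hsum a c d b hac.ne hbd.ne' ha hc hd hb ?_
    have h1 := hM a b
    have h2 := hM a d
    have h3 := hM c b
    have h4 := hM c d
    omega

lemma goodPair_of_lt (n : ℕ) (M : Fin n → Fin n → ℤ) (hM : IsSigning n M) (t : ℕ)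
    (hs : ∀ u, u < t → 2 * u * n ^ 3 < switcherCount n M) : GoodPair n M t := by
  induction t with
  | zero => exact ⟨∅, 1, 1, by simp, by simp, by simp⟩
  | succ t ih =>
    exact goodPair_succ n t M hM (ih fun u hu => hs u (by omega)) (hs t (by omega))

theorem seed_matching_from_switchers (n : ℕ) (hn : 1 ≤ n)
    (M : Fin n → Fin n → ℤ) (hM : IsSigning n M) (η : ℝ) (hη : 0 < η)
    (hs : (switcherCount n M : ℝ) ≥ η * n ^ 4) :
    ∃ π : Equiv.Perm (Fin n), |(∑ i, (M i (π i) : ℝ))| ≥ η * n / 2 := by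
  have hn0 : (0 : ℝ) < n := by exact_mod_cast hn
  obtain ⟨R, p, q, -, -, hsum⟩ := goodPair_of_lt n M hM ⌈η * n / 2⌉₊ (by
    intro u hu
    have hu' : (u : ℝ) < η * n / 2 := Nat.lt_ceil.1 hu
    have h3 : (0 : ℝ) < (n : ℝ) ^ 3 := by positivity
    have : (2 * u * n ^ 3 : ℝ) < switcherCount n M := by nlinarith
    exact_mod_cast this)
  have hle := Nat.le_ceil (η * n / 2)
  have hsum' : 2 * (⌈η * n / 2⌉₊ : ℝ) ≤ ∑ i, ((M i (p i) : ℝ) - M i (q i)) := by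
    exact_mod_cast hsum
  rw [sum_sub_distrib] at hsum'
  by_cases hp : η * n / 2 ≤ ∑ i, (M i (p i) : ℝ)
  · exact ⟨p, hp.trans (le_abs_self _)⟩
  · refine ⟨q, ?_⟩
    push Not at hp
    have := neg_abs_le (∑ i, (M i (q i) : ℝ))
    linarith
end

section
/- Let M be a signing of K_{n,n}, let α > 0 be real, and let π, ρ be permutations of Fin n with π i ≠ ρ i for every i (so the union of the two matchings is a spanning 2-factor F). Suppose the number of unordered pairs {i, j} with i ≠ j, ρ⁻¹(π i) = j, ρ⁻¹(π j) = i, and M i (π i) + M j (π j) ≠ M i (ρ i) + M j (ρ j) (i.e. the number of C₄-components of F that are switchers) is at least α·n. Then there exist permutations μ, ν of Fin n such that {μ i, ν i} = {π i, ρ i} for every i (so μ and ν decompose F into two perfect matchings), |∑ i, M i (μ i)| ≥ (α/4 − 3/n)·n, and |∑ i, M i (ν i)| ≥ (α/4 − 3/n)·n. -/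
open Finset

/-- Signed subset sums with steps of size between 4 and 8 are spread out and 8-dense. -/
theorem range_aux {ι : Type*} [DecidableEq ι] (d : ι → ℤ) (c : ℤ) (P : Finset ι) :
    (∀ p ∈ P, 2 ≤ |d p| ∧ |d p| ≤ 4) →
    ∃ s t : Finset ι, s ⊆ P ∧ t ⊆ P ∧
      4 * (P.card : ℤ) ≤ (c - 2 * ∑ p ∈ s, d p) - (c - 2 * ∑ p ∈ t, d p) ∧
      ∀ x : ℤ, (c - 2 * ∑ p ∈ t, d p) ≤ x → x ≤ (c - 2 * ∑ p ∈ s, d p) →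
        ∃ u : Finset ι, u ⊆ P ∧ |(c - 2 * ∑ p ∈ u, d p) - x| ≤ 8 := by
  induction P using Finset.induction_on with
  | empty =>
    intro _
    refine ⟨∅, ∅, by simp, by simp, by simp, ?_⟩
    intro x h1 h2
    refine ⟨∅, by simp, ?_⟩
    simp at h1 h2 ⊢
    have : c = x := le_antisymm h1 h2
    subst this; simp
  | insert a P ha ih =>
    intro hd
    obtain ⟨s, t, hs, ht, hst, hx⟩ := ih (fun p hp => hd p (Finset.mem_insert_of_mem hp))
    obtain ⟨h2, h4⟩ := hd a (Finset.mem_insert_self _ _)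
    have hsa : a ∉ s := fun h => ha (hs h)
    have hta : a ∉ t := fun h => ha (ht h)
    rw [Finset.card_insert_of_notMem ha]
    push_cast
    rcases le_total 0 (d a) with h0 | h0
    · rw [abs_of_nonneg h0] at h2 h4
      refine ⟨s, insert a t, hs.trans (Finset.subset_insert _ _),
        Finset.insert_subset_insert _ ht, ?_, ?_⟩
      · rw [Finset.sum_insert hta]; linarith
      · intro x hx1 hx2
        rw [Finset.sum_insert hta] at hx1
        by_cases hxt : (c - 2 * ∑ p ∈ t, d p) ≤ x
        · obtain ⟨u, hu, hu'⟩ := hx x hxt hx2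
          exact ⟨u, hu.trans (Finset.subset_insert _ _), hu'⟩
        · refine ⟨t, ht.trans (Finset.subset_insert _ _), ?_⟩
          rw [abs_le]; constructor <;> linarith
    · rw [abs_of_nonpos h0] at h2 h4
      refine ⟨insert a s, t, Finset.insert_subset_insert _ hs,
        ht.trans (Finset.subset_insert _ _), ?_, ?_⟩
      · rw [Finset.sum_insert hsa]; linarith
      · intro x hx1 hx2
        rw [Finset.sum_insert hsa] at hx2
        by_cases hxs : x ≤ (c - 2 * ∑ p ∈ s, d p)
        · obtain ⟨u, hu, hu'⟩ := hx x hx1 hxs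
          exact ⟨u, hu.trans (Finset.subset_insert _ _), hu'⟩
        · refine ⟨s, hs.trans (Finset.subset_insert _ _), ?_⟩
          rw [abs_le]; constructor <;> linarith

theorem choose_aux {ι : Type*} [DecidableEq ι] (d : ι → ℤ) (c T : ℤ) (P : Finset ι)
    (hd : ∀ p ∈ P, 2 ≤ |d p| ∧ |d p| ≤ 4) :
    ∃ u : Finset ι, u ⊆ P ∧
      (P.card : ℤ) - 12 ≤ 2 * |T + (c - 2 * ∑ p ∈ u, d p)| ∧
      (P.card : ℤ) - 12 ≤ 2 * |T - (c - 2 * ∑ p ∈ u, d p)| := by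
  obtain ⟨s, t, hs, ht, hst, hx⟩ := range_aux d c P hd
  by_contra! hcon
  have h1 := hcon s hs
  have h2 := hcon t ht
  by_cases h0 : (c - 2 * ∑ p ∈ t, d p) ≤ 0 ∧ 0 ≤ (c - 2 * ∑ p ∈ s, d p)
  · obtain ⟨u, hu, hu'⟩ := hx 0 h0.1 h0.2
    have h3 := hcon u hu
    generalize (c - 2 * ∑ p ∈ s, d p) = a at *
    generalize (c - 2 * ∑ p ∈ t, d p) = b at *
    generalize (c - 2 * ∑ p ∈ u, d p) = e at *
    clear hx hcon
    simp only [abs_eq_max_neg] at *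
    omega
  · generalize (c - 2 * ∑ p ∈ s, d p) = a at *
    generalize (c - 2 * ∑ p ∈ t, d p) = b at *
    clear hx hcon
    simp only [abs_eq_max_neg] at *
    omega

/-- Mixing two permutations along an invariant set of rows. -/
theorem mix_aux {n : ℕ} (π ρ : Equiv.Perm (Fin n)) (A : Finset (Fin n))
    (hA : ∀ i, ρ⁻¹ (π i) ∈ A ↔ i ∈ A) :
    ∃ μ : Equiv.Perm (Fin n), ∀ i, μ i = if i ∈ A then ρ i else π i := by
  have hinj : Function.Injective (fun i => if i ∈ A then ρ i else π i) := by
    intro i j hij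
    simp only at hij
    have key : ∀ i j, i ∈ A → j ∉ A → ρ i ≠ π j := by
      intro i j hi hj h
      apply hj
      rw [← hA, ← h]
      simpa using hi
    split_ifs at hij with h1 h2 h2
    · exact ρ.injective hij
    · exact absurd hij (key i j h1 h2)
    · exact absurd hij.symm (key j i h2 h1)
    · exact π.injective hij
  exact ⟨Equiv.ofBijective _ (Finite.injective_iff_bijective.mp hinj), fun i => rfl⟩

theorem split_two_factor_with_switchers (n : ℕ) (M : Fin n → Fin n → ℤ)
    (hM : IsSigning n M) (α : ℝ) (hα : 0 < α)
    (π ρ : Equiv.Perm (Fin n)) (hdisj : ∀ i, π i ≠ ρ i)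
    (hsw : ((univ.filter fun p : Fin n × Fin n =>
        p.1 < p.2 ∧ ρ⁻¹ (π p.1) = p.2 ∧ ρ⁻¹ (π p.2) = p.1 ∧
          M p.1 (π p.1) + M p.2 (π p.2) ≠ M p.1 (ρ p.1) + M p.2 (ρ p.2)).card : ℝ)
        ≥ α * n) :
    ∃ μ ν : Equiv.Perm (Fin n),
      (∀ i, (μ i = π i ∧ ν i = ρ i) ∨ (μ i = ρ i ∧ ν i = π i)) ∧
      |(∑ i, (M i (μ i) : ℝ))| ≥ (α / 4 - 3 / n) * n ∧
      |(∑ i, (M i (ν i) : ℝ))| ≥ (α / 4 - 3 / n) * n := by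
  classical
  set P := (univ.filter fun p : Fin n × Fin n =>
        p.1 < p.2 ∧ ρ⁻¹ (π p.1) = p.2 ∧ ρ⁻¹ (π p.2) = p.1 ∧
          M p.1 (π p.1) + M p.2 (π p.2) ≠ M p.1 (ρ p.1) + M p.2 (ρ p.2)) with hP
  set δ : Fin n → ℤ := fun i => M i (π i) - M i (ρ i) with hδ
  have hmem : ∀ p ∈ P, p.1 < p.2 ∧ ρ⁻¹ (π p.1) = p.2 ∧ ρ⁻¹ (π p.2) = p.1 ∧
          M p.1 (π p.1) + M p.2 (π p.2) ≠ M p.1 (ρ p.1) + M p.2 (ρ p.2) := by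
    intro p hp
    simpa [hP] using hp
  obtain ⟨u, hu, hu1, hu2⟩ := choose_aux (fun p : Fin n × Fin n => δ p.1 + δ p.2)
    (∑ i, δ i) (∑ i, (M i (π i) + M i (ρ i))) P (by
      intro p hp
      obtain ⟨-, -, -, h⟩ := hmem p hp
      have a := hM p.1 (π p.1)
      have b := hM p.2 (π p.2)
      have e := hM p.1 (ρ p.1)
      have f := hM p.2 (ρ p.2)
      simp only [hδ, abs_eq_max_neg]
      omega)
  set A : Finset (Fin n) := u.image Prod.fst ∪ u.image Prod.snd with hAdef
  have hfst : ∀ p ∈ u, p.1 ∈ A := fun p hp =>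
    Finset.mem_union_left _ (Finset.mem_image_of_mem _ hp)
  have hsnd : ∀ p ∈ u, p.2 ∈ A := fun p hp =>
    Finset.mem_union_right _ (Finset.mem_image_of_mem _ hp)
  have hAcases : ∀ i ∈ A, ∃ p ∈ u, p.1 = i ∨ p.2 = i := by
    intro i hi
    rcases Finset.mem_union.mp hi with h | h
    · obtain ⟨p, hp, h⟩ := Finset.mem_image.mp h
      exact ⟨p, hp, Or.inl h⟩
    · obtain ⟨p, hp, h⟩ := Finset.mem_image.mp h
      exact ⟨p, hp, Or.inr h⟩
  have hA : ∀ i, ρ⁻¹ (π i) ∈ A ↔ i ∈ A := by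
    have hσ : ∀ i j, ρ⁻¹ (π i) = ρ⁻¹ (π j) → i = j := fun i j h =>
      π.injective (ρ⁻¹.injective h)
    intro i
    constructor
    · intro hi
      obtain ⟨p, hp, h | h⟩ := hAcases _ hi
      · obtain ⟨-, h1, h2, -⟩ := hmem p (hu hp)
        have : p.2 = i := hσ _ _ (h2.trans h)
        exact this ▸ hsnd p hp
      · obtain ⟨-, h1, h2, -⟩ := hmem p (hu hp)
        have : p.1 = i := hσ _ _ (h1.trans h)
        exact this ▸ hfst p hp
    · intro hi
      obtain ⟨p, hp, h | h⟩ := hAcases _ hi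
      · obtain ⟨-, h1, h2, -⟩ := hmem p (hu hp)
        rw [← h, h1]; exact hsnd p hp
      · obtain ⟨-, h1, h2, -⟩ := hmem p (hu hp)
        rw [← h, h2]; exact hfst p hp
  have hsum : ∑ p ∈ u, (δ p.1 + δ p.2) = ∑ i ∈ A, δ i := by
    rw [hAdef, Finset.sum_union, Finset.sum_image, Finset.sum_image, Finset.sum_add_distrib]
    · intro p hp q hq h
      obtain ⟨-, h1, h2, -⟩ := hmem p (hu hp)
      obtain ⟨-, h3, h4, -⟩ := hmem q (hu hq)
      have h' : p.2 = q.2 := h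
      exact Prod.ext (by rw [← h2, ← h4, h']) h
    · intro p hp q hq h
      obtain ⟨-, h1, h2, -⟩ := hmem p (hu hp)
      obtain ⟨-, h3, h4, -⟩ := hmem q (hu hq)
      have h' : p.1 = q.1 := h
      exact Prod.ext h (by rw [← h1, ← h3, h'])
    · rw [Finset.disjoint_left]
      intro i hi hi'
      obtain ⟨p, hp, h⟩ := Finset.mem_image.mp hi
      obtain ⟨q, hq, h'⟩ := Finset.mem_image.mp hi'
      obtain ⟨l1, h1, h2, -⟩ := hmem p (hu hp)
      obtain ⟨l2, h3, h4, -⟩ := hmem q (hu hq)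
      have e : p.1 = q.2 := h.trans h'.symm
      have e2 : p.2 = q.1 := by rw [← h1, ← h4, e]
      rw [e, e2] at l1
      exact lt_asymm l1 l2
  have hA' : ∀ i, π⁻¹ (ρ i) ∈ A ↔ i ∈ A := by
    intro i
    rw [← hA (π⁻¹ (ρ i))]
    simp
  obtain ⟨μ, hμ⟩ := mix_aux π ρ A hA
  obtain ⟨ν, hν⟩ := mix_aux ρ π A hA'
  have hite : ∑ i ∈ A, δ i = ∑ i, if i ∈ A then δ i else 0 := by
    simp
  rw [hsum, hite] at hu1 hu2
  have e1 : 2 * ∑ i, M i (μ i) = ∑ i, (M i (π i) + M i (ρ i)) +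
      (∑ i, δ i - 2 * ∑ i, if i ∈ A then δ i else 0) := by
    rw [Finset.mul_sum, Finset.mul_sum, ← Finset.sum_sub_distrib, ← Finset.sum_add_distrib]
    refine Finset.sum_congr rfl fun i _ => ?_
    rw [hμ i]
    split_ifs <;> simp only [hδ] <;> ring
  have e2 : 2 * ∑ i, M i (ν i) = ∑ i, (M i (π i) + M i (ρ i)) -
      (∑ i, δ i - 2 * ∑ i, if i ∈ A then δ i else 0) := by
    rw [Finset.mul_sum, Finset.mul_sum, ← Finset.sum_sub_distrib, ← Finset.sum_sub_distrib]
    refine Finset.sum_congr rfl fun i _ => ?_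
    rw [hν i]
    split_ifs <;> simp only [hδ] <;> ring
  rw [← e1] at hu1
  rw [← e2] at hu2
  have fin : ∀ S : ℤ, (P.card : ℤ) - 12 ≤ 2 * |2 * S| → |(S : ℝ)| ≥ (α / 4 - 3 / n) * n := by
    intro S h
    rcases Nat.eq_zero_or_pos n with h0 | h0
    · have : (n : ℝ) = 0 := by exact_mod_cast h0
      rw [this]; simp
    · have hn : (n : ℝ) ≠ 0 := by positivity
      have hb : (α / 4 - 3 / n) * n = α * n / 4 - 3 := by field_simp
      rw [hb]
      rw [abs_mul] at h
      have h' : (P.card : ℝ) - 12 ≤ 2 * (2 * |(S : ℝ)|) := by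
        have h2 : (P.card : ℤ) - 12 ≤ 2 * (2 * |S|) := by simpa using h
        exact_mod_cast h2
      linarith
  refine ⟨μ, ν, ?_, ?_, ?_⟩
  · intro i
    rw [hμ, hν]
    by_cases h : i ∈ A <;> simp [h]
  · have := fin _ hu1
    push_cast at this
    exact this
  · have := fin _ hu2
    push_cast at this
    exact this
end

section
/- For every real η > 0 there exists n₀ such that for every even n ≥ n₀ the following holds: for every signing M of K_{n,n} with s(M) ≥ η·n⁴, there exist families of permutations π_j, ρ_j of Fin n indexed by j : Fin (n/2) such that (a) π_j i ≠ ρ_j i for all j and i; (b) for every pair (i, k) there is exactly one occurrence of k among the values π_1 i, …, π_{n/2} i, ρ_1 i, …, ρ_{n/2} i (so the 2-factors F_j decompose K_{n,n}); (c) for every j the permutation (ρ_j)⁻¹ ∘ π_j is a fixed-point-free involution (so every component of F_j is a C₄); and (d) for every j, the number of unordered pairs {i, i'} with (ρ_j)⁻¹(π_j i) = i', i ≠ i', and M i (π_j i) + M i' (π_j i') ≠ M i (ρ_j i) + M i' (ρ_j i') is at least η·n. -/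
open Finset

lemma two_fac_sum_exp {m : ℕ} (t : ℝ) (ht : |t| ≤ 1/2) (y : Fin (m+1) → ℝ) (hy0 : ∑ p, y p = 0)
    (hy : ∀ p, |y p| ≤ 2) : ∑ p, Real.exp (t * y p) ≤ (m+1) * Real.exp (4 * t^2) := by
  have h1 : ∀ p, Real.exp (t * y p) ≤ 1 + t * y p + 4 * t^2 := by
    intro p
    have h2 : |t * y p| ≤ 1 := by
      rw [abs_mul]
      nlinarith [abs_nonneg t, abs_nonneg (y p), hy p]
    have h3 := (abs_le.1 (Real.abs_exp_sub_one_sub_id_le h2)).2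
    have h4 : (y p)^2 ≤ 4 := by
      rw [← sq_abs]; nlinarith [abs_nonneg (y p), hy p]
    nlinarith [sq_nonneg t]
  calc ∑ p, Real.exp (t * y p) ≤ ∑ p, (1 + t * y p + 4 * t^2) := sum_le_sum fun p _ => h1 p
    _ = (m+1) * (1 + 4 * t^2) := by
      rw [sum_add_distrib, sum_add_distrib, ← mul_sum, hy0]
      simp; ring
    _ ≤ _ := by
      have := Real.add_one_le_exp (4 * t^2)
      have hm : (0:ℝ) ≤ m + 1 := by positivity
      nlinarith

lemma two_fac_mgf (t : ℝ) (ht : |t| ≤ 1/2) : ∀ (m : ℕ) (A : Fin m → Fin m → ℝ),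
    (∀ i j, 0 ≤ A i j) → (∀ i j, A i j ≤ 1) →
    ∑ σ : Equiv.Perm (Fin m), Real.exp (t * (∑ r, A r (σ r) - (∑ r, ∑ c, A r c) / m))
      ≤ m.factorial * Real.exp (4 * m * t^2) := by
  intro m
  induction m with
  | zero => intro A _ _; simp
  | succ m ih =>
    intro A hA0 hA1
    set T' : ℝ := ∑ i : Fin m, ∑ c, A i.succ c with hT'
    set T0 : ℝ := ∑ c, A 0 c with hT0
    have hT : ∑ r, ∑ c, A r c = T0 + T' := by rw [Fin.sum_univ_succ]
    let Ap : Fin (m+1) → Fin m → Fin m → ℝ := fun p i k => A i.succ (Equiv.swap 0 p k.succ)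
    let B : Fin (m+1) → ℝ := fun p => ∑ i : Fin m, A i.succ p
    have hTp : ∀ p, ∑ i, ∑ k, Ap p i k = T' - B p := by
      intro p
      simp only [Ap, B, hT', ← sum_sub_distrib]
      refine sum_congr rfl fun i _ => ?_
      rw [← Equiv.sum_comp (Equiv.swap 0 p) (fun c => A i.succ c), Fin.sum_univ_succ]
      simp
    have hB0 : ∀ p, 0 ≤ B p := fun p => sum_nonneg fun i _ => hA0 _ _
    have hB1 : ∀ p, B p ≤ m := fun p => by
      calc B p ≤ ∑ i : Fin m, (1:ℝ) := sum_le_sum fun i _ => hA1 _ _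
        _ = m := by simp
    have hBs : ∑ p, B p = T' := by simp only [B, hT']; rw [sum_comm]
    have hT'0 : 0 ≤ T' := sum_nonneg fun i _ => sum_nonneg fun i _ => hA0 _ _
    have hT'1 : T' ≤ m * (m+1) := by
      calc T' ≤ ∑ i : Fin m, ∑ c : Fin (m+1), (1:ℝ) :=
            sum_le_sum fun i _ => sum_le_sum fun i _ => hA1 _ _
        _ = _ := by simp; ring
    have hT00 : 0 ≤ T0 := sum_nonneg fun i _ => hA0 _ _
    have hT01 : T0 ≤ m+1 := by
      calc T0 ≤ ∑ c : Fin (m+1), (1:ℝ) := sum_le_sum fun i _ => hA1 _ _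
        _ = _ := by simp
    let y : Fin (m+1) → ℝ := fun p => A 0 p + (T' - B p)/m - (T0+T')/(m+1)
    have hm1 : (0:ℝ) < m + 1 := by positivity
    have hy0 : ∑ p, y p = 0 := by
      simp only [y]
      rw [sum_sub_distrib, sum_add_distrib, ← sum_div, sum_sub_distrib, hBs, ← hT0]
      simp only [sum_const, card_univ, Fintype.card_fin, nsmul_eq_mul, Nat.cast_add, Nat.cast_one]
      rcases Nat.eq_zero_or_pos m with h | h
      · subst h
        simp [hT']
      · have : (0:ℝ) < m := by exact_mod_cast h
        field_simp
        ring
    have hy : ∀ p, |y p| ≤ 2 := by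
      intro p
      have e1 : T' / m - T'/(m+1) = T' / (m * (m+1)) := by
        rcases Nat.eq_zero_or_pos m with h | h
        · subst h
          simp [hT']
        · have : (0:ℝ) < m := by exact_mod_cast h
          field_simp
          ring
      have e2 : T' / (m * (m+1)) ≤ 1 := div_le_one_of_le₀ hT'1 (by positivity)
      have e3 : 0 ≤ T' / (m * (m+1)) := by positivity
      have e4 : B p / m ≤ 1 := div_le_one_of_le₀ (hB1 p) (by positivity)
      have e5 : 0 ≤ B p / m := div_nonneg (hB0 p) (by positivity)
      have e6 : T0 / (m+1) ≤ 1 := div_le_one_of_le₀ hT01 (by positivity)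
      have e7 : 0 ≤ T0 / (m+1) := by positivity
      have e8 : y p = A 0 p - T0/(m+1) + (T' / m - T'/(m+1)) - B p / m := by
        simp only [y]; ring
      rw [e8, e1, abs_le]
      have := hA0 0 p
      have := hA1 0 p
      constructor <;> linarith
    have key := two_fac_sum_exp t ht y hy0 hy
    rw [← Equiv.sum_comp (Equiv.Perm.decomposeFin (n := m)).symm, Fintype.sum_prod_type]
    have step : ∀ p : Fin (m+1), ∑ e : Equiv.Perm (Fin m),
        Real.exp (t * (∑ r, A r (Equiv.Perm.decomposeFin.symm (p, e) r)
          - (∑ r, ∑ c, A r c) / ((m+1 : ℕ) : ℝ)))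
        ≤ Real.exp (t * y p) * (m.factorial * Real.exp (4 * m * t^2)) := by
      intro p
      have := ih (Ap p) (fun _ _ => hA0 _ _) (fun _ _ => hA1 _ _)
      refine le_trans (le_of_eq ?_) (mul_le_mul_of_nonneg_left this (Real.exp_nonneg _))
      rw [mul_sum]
      refine sum_congr rfl fun e _ => ?_
      rw [← Real.exp_add, hT, hTp, Fin.sum_univ_succ]
      congr 1
      simp only [Equiv.Perm.decomposeFin_symm_apply_zero,
        Equiv.Perm.decomposeFin_symm_apply_succ, Ap, y]
      push_cast
      ring
    refine (sum_le_sum fun p _ => step p).trans ?_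
    rw [← sum_mul]
    refine (mul_le_mul_of_nonneg_right key (by positivity)).trans (le_of_eq ?_)
    have : Real.exp (4 * ((m+1 : ℕ):ℝ) * t^2) = Real.exp (4 * t^2) * Real.exp (4 * m * t^2) := by
      rw [← Real.exp_add]; push_cast; ring_nf
    rw [this, Nat.factorial_succ]
    push_cast; ring

/-- existence of a good permutation -/
lemma two_fac_perm (m : ℕ) [NeZero m] (δ : ℝ) (hδ : 0 < δ) (hδ1 : δ ≤ 4)
    (hm : m * Real.exp (-(m * δ^2 / 16)) < 1)
    (A : Fin m → Fin m → ℝ) (hA0 : ∀ i j, 0 ≤ A i j) (hA1 : ∀ i j, A i j ≤ 1) :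
    ∃ σ : Equiv.Perm (Fin m), ∀ j : Fin m,
      (∑ r, ∑ c, A r c) / m - δ * m ≤ ∑ r, A r (σ r + j) := by
  by_contra hcon
  push Not at hcon
  set t : ℝ := -(δ/8) with ht
  have htabs : |t| ≤ 1/2 := by rw [ht, abs_neg, abs_of_pos (by positivity)]; linarith
  set μ := (∑ r, ∑ c, A r c) / m with hμ
  have h1 : ∀ j : Fin m, ∑ σ : Equiv.Perm (Fin m), Real.exp (t * (∑ r, A r (σ r + j) - μ))
      ≤ m.factorial * Real.exp (4 * m * t^2) := by
    intro j
    have := two_fac_mgf t htabs m (fun r c => A r (c + j)) (fun _ _ => hA0 _ _) (fun _ _ => hA1 _ _)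
    have e : ∑ r, ∑ c, A r (c + j) = ∑ r, ∑ c, A r c :=
      sum_congr rfl fun r _ => Equiv.sum_comp (Equiv.addRight j) (fun c => A r c)
    simp only [e] at this
    exact this
  have h2 : ∀ σ : Equiv.Perm (Fin m), Real.exp (δ/8 * (δ * m)) ≤
      ∑ j, Real.exp (t * (∑ r, A r (σ r + j) - μ)) := by
    intro σ
    obtain ⟨j, hj⟩ := hcon σ
    refine le_trans ?_ (single_le_sum (f := fun j => Real.exp (t * (∑ r, A r (σ r + j) - μ)))
      (fun _ _ => Real.exp_nonneg _) (mem_univ j))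
    apply Real.exp_le_exp.2
    rw [ht]
    nlinarith
  have h3 : (m.factorial : ℝ) * Real.exp (δ/8 * (δ * m)) ≤
      m * (m.factorial * Real.exp (4 * m * t^2)) := by
    calc (m.factorial : ℝ) * Real.exp (δ/8 * (δ * m))
        = ∑ σ : Equiv.Perm (Fin m), Real.exp (δ/8 * (δ * m)) := by
          simp [Fintype.card_perm]
      _ ≤ ∑ σ : Equiv.Perm (Fin m), ∑ j, Real.exp (t * (∑ r, A r (σ r + j) - μ)) :=
          sum_le_sum fun σ _ => h2 σ
      _ = ∑ j, ∑ σ : Equiv.Perm (Fin m), Real.exp (t * (∑ r, A r (σ r + j) - μ)) := sum_comm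
      _ ≤ ∑ j : Fin m, (m.factorial * Real.exp (4 * m * t^2) : ℝ) := sum_le_sum fun j _ => h1 j
      _ = _ := by simp
  have h4 : Real.exp (δ/8 * (δ * m)) ≤ m * Real.exp (4 * m * t^2) := by
    have : (0:ℝ) < m.factorial := by exact_mod_cast m.factorial_pos
    nlinarith
  have h5 : Real.exp (-(m * δ^2 / 16)) * Real.exp (δ/8 * (δ * m)) = Real.exp (4 * m * t^2) := by
    rw [← Real.exp_add, ht]; ring_nf
  have h6 := Real.exp_pos (δ/8 * (δ * m))
  rw [← h5] at h4
  nlinarith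

lemma two_fac_trans {α : Type*} [DecidableEq α] (a b c d : α) (hab : a ≠ b) (hcd : c ≠ d) :
    ∃ τ : Equiv.Perm α, τ a = c ∧ τ b = d := by
  refine ⟨(Equiv.swap a c).trans (Equiv.swap (Equiv.swap a c b) d), ?_, ?_⟩
  · have : Equiv.swap a c b ≠ c := by
      intro h
      apply hab
      apply (Equiv.swap a c).injective
      rw [h, Equiv.swap_apply_left]
    simp only [Equiv.trans_apply, Equiv.swap_apply_left]
    exact Equiv.swap_apply_of_ne_of_ne this.symm hcd
  · simp

/-- averaging over pairings -/
lemma two_fac_pairing (m n : ℕ) (hn : n = 2 * m) (f : Fin n → Fin n → ℝ)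
    (hf : ∀ a b, 0 ≤ f a b) (hs : ∀ a b, f a b = f b a) :
    ∃ R : Fin m × Bool ≃ Fin n,
      ∑ p ∈ univ.filter (fun p : Fin n × Fin n => p.1 < p.2), f p.1 p.2
        ≤ n * ∑ r, f (R (r, false)) (R (r, true)) := by
  rcases Nat.eq_zero_or_pos m with h0 | hmpos
  · subst h0; subst hn
    exact ⟨Fintype.equivOfCardEq (by simp), by simp⟩
  have e0 : Fin m × Bool ≃ Fin n := Fintype.equivOfCardEq (by simp [hn, mul_comm])
  set F := ∑ p ∈ univ.filter (fun p : Fin n × Fin n => p.1 < p.2), f p.1 p.2 with hF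
  let G := ∑ p ∈ (univ : Finset (Fin n)).offDiag, f p.1 p.2
  have hG : G = 2 * F := by
    have h1 : (univ : Finset (Fin n)).offDiag = univ.filter (fun p : Fin n × Fin n => p.1 < p.2) ∪
        univ.filter (fun p : Fin n × Fin n => p.2 < p.1) := by
      ext p; simp
    have h2 : ∑ p ∈ univ.filter (fun p : Fin n × Fin n => p.2 < p.1), f p.1 p.2 = F := by
      rw [hF]
      refine sum_nbij' Prod.swap Prod.swap ?_ ?_ ?_ ?_ ?_ <;> simp
      intro a b _; exact hs a b
    simp only [G]
    rw [h1, sum_union, h2]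
    · ring
    · rw [disjoint_filter]; intro p _ h h'; exact absurd h (lt_asymm h')
  have hF0 : 0 ≤ F := sum_nonneg fun p _ => hf _ _
  -- for all a ≠ b
  have key : ∀ a b : Fin n, a ≠ b → ((n * n - n : ℕ) : ℝ) *
      ∑ σ : Equiv.Perm (Fin n), f (σ a) (σ b) = n.factorial * G := by
    intro a b hab
    have h1 : ∀ p ∈ (univ : Finset (Fin n)).offDiag,
        ∑ σ : Equiv.Perm (Fin n), f (σ p.1) (σ p.2) = ∑ σ : Equiv.Perm (Fin n), f (σ a) (σ b) := by
      intro p hp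
      obtain ⟨τ, h1, h2⟩ := two_fac_trans p.1 p.2 a b (by simpa using hp) hab
      rw [← Equiv.sum_comp (Equiv.mulRight τ)]
      simp [h1, h2]
    have h2 : ∀ σ : Equiv.Perm (Fin n), ∑ p ∈ (univ : Finset (Fin n)).offDiag, f (σ p.1) (σ p.2)
        = G := by
      intro σ
      refine sum_nbij' (Prod.map σ σ) (Prod.map σ.symm σ.symm) ?_ ?_ ?_ ?_ ?_ <;> simp
    have h3 : ∑ p ∈ (univ : Finset (Fin n)).offDiag, ∑ σ : Equiv.Perm (Fin n), f (σ p.1) (σ p.2)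
        = n.factorial * G := by
      rw [sum_comm, sum_congr rfl fun σ _ => h2 σ]
      simp [Fintype.card_perm]
    rw [sum_congr rfl h1] at h3
    simpa [offDiag_card] using h3
  by_contra hcon
  push Not at hcon
  have h1 : ∑ σ : Equiv.Perm (Fin n), n * ∑ r, f (σ (e0 (r, false))) (σ (e0 (r, true)))
      < ∑ σ : Equiv.Perm (Fin n), F :=
    sum_lt_sum_of_nonempty univ_nonempty fun σ _ => by simpa using hcon (e0.trans σ)
  rw [← mul_sum, sum_comm] at h1
  have hN : ((n * n - n : ℕ) : ℝ) = (n:ℝ) * n - n := by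
    rw [Nat.cast_sub (Nat.le_mul_self n)]; push_cast; ring
  have hn2 : (2:ℝ) ≤ n := by subst hn; push_cast; exact_mod_cast (by omega : 2 ≤ 2 * m)
  have h2 : ∑ r : Fin m, ((n * n - n : ℕ) : ℝ) *
      ∑ σ : Equiv.Perm (Fin n), f (σ (e0 (r, false))) (σ (e0 (r, true)))
      = m * (n.factorial * G) := by
    rw [sum_congr rfl fun r _ => key _ _ (by simp)]
    simp
  rw [← mul_sum, hN, hG] at h2
  have hmn : (n:ℝ) = 2 * m := by subst hn; push_cast; ring
  simp only [sum_const, card_univ, Fintype.card_perm, Fintype.card_fin, nsmul_eq_mul] at h1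
  set X := ∑ r : Fin m, ∑ σ : Equiv.Perm (Fin n), f (σ (e0 (r, false))) (σ (e0 (r, true))) with hX
  have hfac : (0:ℝ) < n.factorial := by exact_mod_cast n.factorial_pos
  have h3 : ((n:ℝ) - 1) * X = n.factorial * F := by
    have : (n:ℝ) * (((n:ℝ) - 1) * X) = n * (n.factorial * F) := by
      rw [← sub_eq_zero] at h2 ⊢
      rw [← h2, hmn]; ring
    exact mul_left_cancel₀ (by positivity) this
  have hX0 : 0 ≤ X := sum_nonneg fun _ _ => sum_nonneg fun _ _ => hf _ _
  nlinarith

lemma two_fac_main (η : ℝ) (hη : 0 < η) (m n : ℕ) (hn : n = 2 * m) [NeZero m]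
    (hm : m * Real.exp (-(m * (2 * η)^2 / 16)) < 1)
    (M : Fin n → Fin n → ℤ)
    (hsw : (switcherCount n M : ℝ) ≥ η * n ^ 4) :
    ∃ π ρ : Fin m → Equiv.Perm (Fin n),
      (∀ j i, π j i ≠ ρ j i) ∧
      (∀ i k : Fin n, ∃! jb : Fin m × Bool,
        (if jb.2 then π jb.1 i else ρ jb.1 i) = k) ∧
      (∀ j, ((ρ j)⁻¹ * π j) * ((ρ j)⁻¹ * π j) = 1 ∧
        ∀ i, ((ρ j)⁻¹ * π j) i ≠ i) ∧
      (∀ j, ((univ.filter fun p : Fin n × Fin n =>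
          p.1 < p.2 ∧ (ρ j)⁻¹ (π j p.1) = p.2 ∧
            M p.1 (π j p.1) + M p.2 (π j p.2) ≠
              M p.1 (ρ j p.1) + M p.2 (ρ j p.2)).card : ℝ) ≥ η * n) := by
  have hmpos : (0:ℝ) < m := by exact_mod_cast Nat.pos_of_ne_zero (NeZero.ne m)
  have hmn : (n:ℝ) = 2 * m := by subst hn; push_cast; ring
  let S : Fin n → Fin n → Fin n → Fin n → ℝ := fun a c b d =>
    if M a b + M c d ≠ M a d + M c b then 1 else 0
  have hS0 : ∀ a c b d, 0 ≤ S a c b d := by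
    intro a c b d; simp only [S]; split_ifs <;> norm_num
  have hS1 : ∀ a c b d, S a c b d ≤ 1 := by
    intro a c b d; simp only [S]; split_ifs <;> norm_num
  have hSr : ∀ a c b d, S a c b d = S c a b d := by
    intro a c b d; simp only [S]; congr 1
    apply propext; apply not_congr; constructor <;> intro h <;> linarith
  have hSc : ∀ a c b d, S a c b d = S a c d b := by
    intro a c b d; simp only [S]; congr 1
    apply propext; apply not_congr; constructor <;> intro h <;> linarith
  let lt2 := univ.filter (fun p : Fin n × Fin n => p.1 < p.2)
  have hcount : (switcherCount n M : ℝ) = ∑ p ∈ lt2, ∑ q ∈ lt2, S p.1 p.2 q.1 q.2 := by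
    rw [← sum_product']
    simp only [S]
    rw [← sum_filter, sum_const, nsmul_eq_mul, mul_one, switcherCount]
    congr 1
    refine card_nbij' (fun p => ((p.1, p.2.1), (p.2.2.1, p.2.2.2)))
      (fun p => (p.1.1, p.1.2, p.2.1, p.2.2)) ?_ ?_ ?_ ?_
    · intro p hp
      simp [lt2] at hp ⊢
      tauto
    · intro p hp
      simp [lt2] at hp ⊢
      tauto
    · intro p _; rfl
    · intro p _; rfl
  obtain ⟨R, hR⟩ := two_fac_pairing m n hn (fun a c => ∑ q ∈ lt2, S a c q.1 q.2)
    (fun a c => sum_nonneg fun q _ => hS0 _ _ _ _)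
    (fun a c => sum_congr rfl fun q _ => hSr _ _ _ _)
  obtain ⟨C, hC⟩ := two_fac_pairing m n hn
    (fun b d => ∑ r, S (R (r, false)) (R (r, true)) b d)
    (fun a c => sum_nonneg fun q _ => hS0 _ _ _ _)
    (fun a c => sum_congr rfl fun q _ => hSc _ _ _ _)
  let A : Fin m → Fin m → ℝ := fun r c =>
    S (R (r, false)) (R (r, true)) (C (c, false)) (C (c, true))
  have hT : 4 * η * m^2 ≤ ∑ r, ∑ c, A r c := by
    rw [sum_comm] at hC
    rw [← hcount] at hR
    have h1 : ∑ r, ∑ c, A r c =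
      ∑ c, ∑ r, S (R (r, false)) (R (r, true)) (C (c, false)) (C (c, true)) := sum_comm
    rw [← h1] at hC
    have h2 : η * n^4 ≤ n * (n * ∑ r, ∑ c, A r c) :=
      (hsw.le.trans hR).trans (mul_le_mul_of_nonneg_left hC (by positivity))
    have h3 : (n:ℝ)^2 * (η * n^2) ≤ n^2 * ∑ r, ∑ c, A r c := by nlinarith
    have h4 := le_of_mul_le_mul_left h3 (by rw [hmn]; positivity)
    rw [hmn] at h4
    nlinarith
  have hη1 : 4 * η ≤ 1 := by
    have : ∑ r, ∑ c, A r c ≤ ∑ r : Fin m, ∑ c : Fin m, (1:ℝ) :=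
      sum_le_sum fun i _ => sum_le_sum fun i _ => hS1 _ _ _ _
    simp at this
    have h3 : (m:ℝ)^2 * (4 * η) ≤ m^2 * 1 := by nlinarith
    exact le_of_mul_le_mul_left h3 (by positivity)
  obtain ⟨σ, hσ⟩ := two_fac_perm m (2 * η) (by positivity) (by linarith) hm A
    (fun _ _ => hS0 _ _ _ _) (fun _ _ => hS1 _ _ _ _)
  let col : Fin m → Equiv.Perm (Fin m × Bool) := fun j =>
    (σ.trans (Equiv.addRight j)).prodCongr (Equiv.refl Bool)
  let flip : Equiv.Perm (Fin m × Bool) := (Equiv.refl (Fin m)).prodCongr Equiv.boolNot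
  let π : Fin m → Equiv.Perm (Fin n) := fun j => (R.symm.trans (col j)).trans C
  let ρ : Fin m → Equiv.Perm (Fin n) := fun j => (R.symm.trans (flip.trans (col j))).trans C
  have hπ : ∀ j r x, π j (R (r, x)) = C (σ r + j, x) := by
    intro j r x; simp [π, col]
  have hρ : ∀ j r x, ρ j (R (r, x)) = C (σ r + j, !x) := by
    intro j r x; simp [ρ, col, flip]
  have hinv : ∀ j r x, (ρ j)⁻¹ (π j (R (r, x))) = R (r, !x) := by
    intro j r x
    rw [Equiv.Perm.inv_eq_iff_eq, hπ, hρ]; simp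
  refine ⟨π, ρ, ?_, ?_, ?_, ?_⟩
  · intro j i
    obtain ⟨⟨r, x⟩, rfl⟩ := R.surjective i
    rw [hπ, hρ]
    simp
  · intro i k
    obtain ⟨⟨r, x⟩, rfl⟩ := R.surjective i
    obtain ⟨⟨c, z⟩, rfl⟩ := C.surjective k
    simp only [hπ, hρ]
    refine ⟨(c - σ r, decide (x = z)), ?_, ?_⟩
    · cases x <;> cases z <;> simp
    · rintro ⟨j, b⟩ h
      cases b <;> simp at h <;> obtain ⟨h1, h2⟩ := h <;> subst h1 <;> subst h2 <;> simp
  · intro j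
    constructor
    · ext i
      obtain ⟨⟨r, x⟩, rfl⟩ := R.surjective i
      simp only [Equiv.Perm.mul_apply, hinv]
      simp
    · intro i
      obtain ⟨⟨r, x⟩, rfl⟩ := R.surjective i
      simp only [Equiv.Perm.mul_apply, hinv]
      simp
  · intro j
    have h1 : η * n ≤ ∑ r, A r (σ r + j) := by
      refine le_trans ?_ (hσ j)
      have : 4 * η * m ≤ (∑ r, ∑ c, A r c) / m := by
        rw [le_div_iff₀ hmpos]; nlinarith
      rw [hmn]; linarith
    have h2 : ∑ r, A r (σ r + j) = ((univ.filter fun r : Fin m =>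
        M (R (r, false)) (C (σ r + j, false)) + M (R (r, true)) (C (σ r + j, true)) ≠
        M (R (r, false)) (C (σ r + j, true)) + M (R (r, true)) (C (σ r + j, false))).card : ℝ) := by
      simp only [A, S]
      rw [← sum_filter, sum_const, nsmul_eq_mul, mul_one]
    rw [h2] at h1
    refine ge_iff_le.2 (h1.trans ?_)
    rw [Nat.cast_le]
    refine card_le_card_of_injOn (fun r => if R (r, false) < R (r, true) then
      (R (r, false), R (r, true)) else (R (r, true), R (r, false))) ?_ ?_
    · intro r hr
      simp only [coe_filter, mem_univ, true_and, Set.mem_setOf_eq] at hr ⊢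
      split_ifs with h
      · refine ⟨h, by simp [hinv], ?_⟩
        simp only [hπ, hρ, Bool.not_false, Bool.not_true]
        exact hr
      · refine ⟨lt_of_le_of_ne (not_lt.1 h) (by simp), by simp [hinv], ?_⟩
        simp only [hπ, hρ, Bool.not_false, Bool.not_true]
        intro h'; apply hr; linarith
    · intro r _ r' _ h
      simp only at h
      split_ifs at h <;> simp at h <;> exact h

theorem even_case_switcher_rich_two_factorization :
    ∀ η : ℝ, 0 < η →
    ∃ n₀ : ℕ, ∀ n : ℕ, n₀ ≤ n → Even n →
    ∀ M : Fin n → Fin n → ℤ, IsSigning n M →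
    (switcherCount n M : ℝ) ≥ η * n ^ 4 →
    ∃ π ρ : Fin (n / 2) → Equiv.Perm (Fin n),
      (∀ j i, π j i ≠ ρ j i) ∧
      (∀ i k : Fin n, ∃! jb : Fin (n / 2) × Bool,
        (if jb.2 then π jb.1 i else ρ jb.1 i) = k) ∧
      (∀ j, ((ρ j)⁻¹ * π j) * ((ρ j)⁻¹ * π j) = 1 ∧
        ∀ i, ((ρ j)⁻¹ * π j) i ≠ i) ∧
      (∀ j, ((univ.filter fun p : Fin n × Fin n =>
          p.1 < p.2 ∧ (ρ j)⁻¹ (π j p.1) = p.2 ∧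
            M p.1 (π j p.1) + M p.2 (π j p.2) ≠
              M p.1 (ρ j p.1) + M p.2 (ρ j p.2)).card : ℝ) ≥ η * n) := by
  intro η hη
  refine ⟨2 * (⌈32 / η^4⌉₊ + 1), ?_⟩
  intro n hn0 heven M _ hsw
  have hn : n = 2 * (n / 2) := by obtain ⟨k, hk⟩ := heven; omega
  have hm0 : ⌈32 / η^4⌉₊ + 1 ≤ n / 2 := by omega
  have : NeZero (n / 2) := ⟨by omega⟩
  refine two_fac_main η hη (n / 2) n hn ?_ M hsw
  generalize n / 2 = m at hm0
  have h1 : 32 / η^4 ≤ m := (Nat.le_ceil _).trans (by exact_mod_cast (by omega))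
  have hmpos : (0:ℝ) < m := by exact_mod_cast (by omega : 0 < m)
  rw [Real.exp_neg, ← div_eq_mul_inv, div_lt_one (Real.exp_pos _)]
  have h2 := Real.quadratic_le_exp_of_nonneg (x := m * (2 * η)^2 / 16) (by positivity)
  rw [div_le_iff₀ (by positivity)] at h1
  have h3 : (m:ℝ) ≤ (m * (2 * η)^2 / 16)^2 / 2 := by nlinarith
  have h4 : (0:ℝ) ≤ m * (2 * η)^2 / 16 := by positivity
  linarith
end

section
/- For every real η > 0 there exists n₀ such that for every odd n ≥ n₀ the following holds: for every signing M of K_{n,n} with s(M) ≥ η·n⁴, there exist families of permutations π_j, ρ_j of Fin n indexed by j : Fin ((n−1)/2) such that (a) for all j and i: π_j i ≠ i, ρ_j i ≠ i, and π_j i ≠ ρ_j i; (b) for every pair (i, k) with k ≠ i there is exactly one occurrence of k among the values π_1 i, …, π_{(n−1)/2} i, ρ_1 i, …, ρ_{(n−1)/2} i (so the 2-factors F_j decompose K_{n,n} minus the diagonal matching); and (c) for every j, the number of unordered pairs {i, i'} with (ρ_j)⁻¹(π_j i) = i', i ≠ i', and M i (π_j i) + M i' (π_j i') ≠ M i (ρ_j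 i) + M i' (ρ_j i') is at least η·n/2. -/
open Finset

lemma fibre_card {T Ω V : Type} [Fintype T] [Fintype Ω] [Fintype V] [DecidableEq T]
    [DecidableEq Ω] [DecidableEq V] (e : T → Ω) (he : Function.Injective e) (g : T → V) :
    (univ.filter fun σ : Ω ≃ V => ∀ x, σ (e x) = g x).card
      ≤ (Fintype.card Ω - Fintype.card T).factorial := by
  classical
  by_cases hne : ∃ σ0 : Ω ≃ V, ∀ x, σ0 (e x) = g x
  swap
  · rw [Finset.filter_eq_empty_iff.2]
    · simp
    · intro σ _ h
      exact hne ⟨σ, h⟩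
  obtain ⟨σ0, h0⟩ := hne
  have key : ∀ σ : Ω ≃ V, (∀ x, σ (e x) = g x) →
      ∀ a, a ∉ Set.range e ↔ σ a ∉ Set.range g := by
    intro σ h a
    rw [not_iff_not]
    constructor
    · rintro ⟨x, rfl⟩
      exact ⟨x, (h x).symm⟩
    · rintro ⟨x, hx⟩
      exact ⟨x, σ.injective (by rw [h x, hx])⟩
  have hA : Fintype.card {a : Ω // a ∉ Set.range e} = Fintype.card Ω - Fintype.card T := by
    rw [Fintype.card_subtype_compl]
    congr 1
    exact (Fintype.card_congr (Equiv.ofInjective e he)).symm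
  rw [← Fintype.card_subtype, ← hA,
    ← Fintype.card_equiv
      (σ0.subtypeEquiv (q := fun b => b ∉ Set.range g) (key σ0 h0))]
  refine Fintype.card_le_of_injective
    (fun σ : {σ : Ω ≃ V // ∀ x, σ (e x) = g x} =>
      σ.1.subtypeEquiv (q := fun b => b ∉ Set.range g) (key σ.1 σ.2)) ?_
  rintro ⟨σ, hσ⟩ ⟨σ', hσ'⟩ h
  ext a
  simp only
  by_cases ha : a ∈ Set.range e
  · obtain ⟨x, rfl⟩ := ha
    rw [hσ, hσ']
  · have := congrArg (fun t => (t ⟨a, ha⟩).1) h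
    simpa using this

lemma greedy_matching {α : Type} [Fintype α] [DecidableEq α] (τ : α → α)
    (hτ : Function.Injective τ) (j : α) (hj : ∀ k, τ k = k → k = j) :
    ∃ S : Finset α, (∀ k ∈ S, ∀ l ∈ S, τ k ≠ l) ∧ Fintype.card α ≤ 3 * S.card + 1 := by
  classical
  obtain ⟨S, hS, hmax⟩ := Finset.exists_max_image
    ((univ : Finset (Finset α)).filter fun S => ∀ k ∈ S, ∀ l ∈ S, τ k ≠ l) Finset.card
    ⟨∅, by simp⟩
  simp only [mem_filter, mem_univ, true_and] at hS hmax
  refine ⟨S, hS, ?_⟩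
  have hsub : (univ : Finset α) ⊆
      insert j ((S ∪ S.image τ) ∪ univ.filter (fun x => τ x ∈ S)) := by
    intro k _
    by_contra hk
    simp only [mem_insert, mem_union, mem_image, mem_filter, mem_univ, true_and, not_or,
      not_exists, not_and] at hk
    obtain ⟨hkj, ⟨hkS, hkI⟩, hkP⟩ := hk
    have := hmax (insert k S) (by
      intro a ha b hb
      rcases mem_insert.1 ha with rfl | ha' <;> rcases mem_insert.1 hb with rfl | hb'
      · exact fun h => hkj (hj _ h)
      · exact fun h => hkP (h ▸ hb')
      · exact hkI a ha'
      · exact hS a ha' b hb')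
    rw [card_insert_of_notMem hkS] at this
    omega
  have h1 := card_le_card hsub
  have h2 : (univ.filter (fun x => τ x ∈ S)).card ≤ S.card :=
    card_le_card_of_injOn τ (fun x hx => by simpa using hx) hτ.injOn
  have h3 : (S.image τ).card ≤ S.card := card_image_le
  have h4 := card_insert_le j ((S ∪ S.image τ) ∪ univ.filter (fun x => τ x ∈ S))
  have h5 := card_union_le (S ∪ S.image τ) (univ.filter (fun x => τ x ∈ S))
  have h6 := card_union_le S (S.image τ)
  rw [card_univ] at h1
  omega

lemma chernoff {W : Type} [Fintype W] [DecidableEq W] (G : Finset W) (η : ℝ) (hη : 0 < η)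
    (hG : 4 * η * Fintype.card W ≤ G.card) (r : ℕ) :
    ((univ.filter fun f : Fin r → W =>
      ((univ.filter fun i => f i ∈ G).card : ℝ) < 7 / 2 * η * r).card : ℝ)
      ≤ (Fintype.card W : ℝ) ^ r * Real.exp (-η / 60) ^ r := by
  classical
  set B := univ.filter fun f : Fin r → W =>
      ((univ.filter fun i => f i ∈ G).card : ℝ) < 7 / 2 * η * r with hB
  have hsum : ∑ f : Fin r → W, ((15 : ℝ) / 16) ^ (univ.filter fun i => f i ∈ G).card
      = (∑ w : W, if w ∈ G then (15 : ℝ) / 16 else 1) ^ r := by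
    rw [← Fin.prod_const, Finset.prod_univ_sum]
    simp only [Fintype.piFinset_univ]
    refine sum_congr rfl fun f _ => ?_
    rw [Finset.prod_ite, Finset.prod_const, Finset.prod_const_one, mul_one]
  have hsum2 : (∑ w : W, if w ∈ G then (15 : ℝ) / 16 else 1)
      = Fintype.card W - G.card / 16 := by
    have : ∀ w : W, (if w ∈ G then (15 : ℝ) / 16 else 1) = 1 - (if w ∈ G then 1 / 16 else 0) := by
      intro w; split_ifs <;> norm_num
    simp only [this, sum_sub_distrib]
    simp
    ring
  have hle : (∑ w : W, if w ∈ G then (15 : ℝ) / 16 else 1)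
      ≤ Fintype.card W * Real.exp (-η / 4) := by
    rw [hsum2]
    have := Real.add_one_le_exp (-η / 4)
    have h0 : (0 : ℝ) ≤ Fintype.card W := by positivity
    nlinarith
  have hnn : (0 : ℝ) ≤ ∑ w : W, if w ∈ G then (15 : ℝ) / 16 else 1 :=
    sum_nonneg fun w _ => by split_ifs <;> norm_num
  have hlog : Real.exp (-1 / 15) ≤ 15 / 16 := by
    rw [show (-1 / 15 : ℝ) = -(1 / 15) by norm_num, Real.exp_neg]
    have := Real.add_one_le_exp (1 / 15 : ℝ)
    rw [inv_le_comm₀ (Real.exp_pos _) (by norm_num)]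
    norm_num at this ⊢
    linarith
  have hterm : ∀ f ∈ B, Real.exp (-1 / 15 * (7 / 2 * η * r))
      ≤ ((15 : ℝ) / 16) ^ (univ.filter fun i => f i ∈ G).card := by
    intro f hf
    rw [hB, mem_filter] at hf
    calc Real.exp (-1 / 15 * (7 / 2 * η * r))
        ≤ Real.exp (((univ.filter fun i => f i ∈ G).card : ℝ) * (-1 / 15)) := by
          apply Real.exp_le_exp.2
          linarith [hf.2]
      _ = Real.exp (-1 / 15) ^ (univ.filter fun i => f i ∈ G).card := by
          rw [Real.exp_nat_mul]
      _ ≤ _ := pow_le_pow_left₀ (Real.exp_pos _).le hlog _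
  have hmain : (B.card : ℝ) * Real.exp (-1 / 15 * (7 / 2 * η * r))
      ≤ (Fintype.card W * Real.exp (-η / 4)) ^ r := by
    calc (B.card : ℝ) * Real.exp (-1 / 15 * (7 / 2 * η * r))
        = ∑ f ∈ B, Real.exp (-1 / 15 * (7 / 2 * η * r)) := by simp
      _ ≤ ∑ f ∈ B, ((15 : ℝ) / 16) ^ (univ.filter fun i => f i ∈ G).card := sum_le_sum hterm
      _ ≤ ∑ f : Fin r → W, ((15 : ℝ) / 16) ^ (univ.filter fun i => f i ∈ G).card :=
          sum_le_sum_of_subset_of_nonneg (subset_univ _) fun _ _ _ => by positivity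
      _ = _ := hsum
      _ ≤ _ := pow_le_pow_left₀ hnn hle _
  rw [mul_pow, ← Real.exp_nat_mul] at hmain
  rw [← Real.exp_nat_mul]
  have hs : Real.exp (r * (-η / 4)) =
      Real.exp (r * (-η / 60)) * Real.exp (-1 / 15 * (7 / 2 * η * r)) := by
    rw [← Real.exp_add]; congr 1; ring
  rw [hs] at hmain
  rw [← mul_assoc ((Fintype.card W : ℝ) ^ r)] at hmain
  exact le_of_mul_le_mul_right hmain (Real.exp_pos _)

/-- the four entries form a switcher -/
def Sw {n : ℕ} (M : Fin n → Fin n → ℤ) (w : Fin n × Fin n × Fin n × Fin n) : Prop :=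
  M w.1 w.2.2.1 + M w.2.1 w.2.2.2 ≠ M w.1 w.2.2.2 + M w.2.1 w.2.2.1

instance {n : ℕ} (M : Fin n → Fin n → ℤ) : DecidablePred (Sw M) := fun w => by
  unfold Sw; infer_instance

lemma four_mul_switcherCount {n : ℕ} (M : Fin n → Fin n → ℤ) :
    4 * switcherCount n M ≤ (univ.filter (Sw M)).card := by
  have : 4 * switcherCount n M = ((univ.filter fun p : Fin n × Fin n × Fin n × Fin n =>
    p.1 < p.2.1 ∧ p.2.2.1 < p.2.2.2 ∧
      M p.1 p.2.2.1 + M p.2.1 p.2.2.2 ≠ M p.1 p.2.2.2 + M p.2.1 p.2.2.1)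
      ×ˢ (univ : Finset (Bool × Bool))).card := by
    rw [card_product]; simp [switcherCount, mul_comm]
  rw [this]
  refine card_le_card_of_injOn (fun q =>
    (if q.2.1 then q.1.1 else q.1.2.1, if q.2.1 then q.1.2.1 else q.1.1,
     if q.2.2 then q.1.2.2.1 else q.1.2.2.2, if q.2.2 then q.1.2.2.2 else q.1.2.2.1)) ?_ ?_
  · rintro ⟨⟨a, c, b, d⟩, x, y⟩ h
    simp only [coe_product, coe_filter, mem_univ, true_and, Set.mem_prod, Set.mem_ofPred_eq,
      Sw, coe_univ, Set.mem_univ, and_true] at h ⊢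
    obtain ⟨_, _, h⟩ := h
    cases x <;> cases y <;> simp <;> omega
  · rintro ⟨⟨a, c, b, d⟩, x, y⟩ h ⟨⟨a', c', b', d'⟩, x', y'⟩ h' e
    simp only [coe_product, coe_filter, mem_univ, true_and, Set.mem_prod, Set.mem_ofPred_eq,
      coe_univ, Set.mem_univ, and_true] at h h'
    obtain ⟨h1, h2, _⟩ := h
    obtain ⟨h1', h2', _⟩ := h'
    cases x <;> cases y <;> cases x' <;> cases y' <;>
      simp only [Prod.mk.injEq, if_true, if_false, Bool.false_eq_true] at e ⊢ <;>
      (obtain ⟨e1, e2, e3, e4⟩ := e; subst e1 e2 e3 e4; first | tauto | (exfalso; omega))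

/-- an idempotent Latin square, as a family of maps -/
lemma exists_idem_latin (m : ℕ) (hm : 4 ≤ m) :
    ∃ (α : Type) (_ : Fintype α) (_ : DecidableEq α) (τ : α → α → α),
      Fintype.card α = m ∧ (∀ j, Function.Injective (τ j)) ∧ (∀ j, τ j j = j) ∧
      (∀ k l, ∃ j, τ j k = l) ∧ (∀ j j' k, τ j k = τ j' k → j = j') := by
  have hodd : ∀ s : ℕ, ∃ h : ZMod (2 * s + 1), h + h = 1 := by
    intro s
    refine ⟨((s + 1 : ℕ) : ZMod (2 * s + 1)), ?_⟩
    have : ((2 * s + 1 : ℕ) : ZMod (2 * s + 1)) = 0 := ZMod.natCast_self _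
    push_cast at this ⊢
    linear_combination this
  rcases Nat.even_or_odd' m with ⟨s', rfl | rfl⟩
  · obtain ⟨s, rfl⟩ : ∃ s, s' = s + 1 := ⟨s' - 1, by omega⟩
    obtain ⟨h, hh⟩ := hodd s
    have : Fact (1 < 2 * s + 1) := ⟨by omega⟩
    have hne : h ≠ 0 := by
      rintro rfl
      simp at hh
    refine ⟨Option (ZMod (2 * s + 1)), inferInstance, inferInstance,
      fun j x => match j, x with
        | none, none => none
        | none, some k => some (k + 1)
        | some j, none => some (j + h)
        | some j, some k => if k = j - h then none else some (2 * j - k), ?_, ?_, ?_, ?_, ?_⟩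
    · rw [Fintype.card_option, ZMod.card]; ring
    · rintro (_ | j) (_ | k) (_ | l) e <;> simp only [reduceCtorEq, Option.some.injEq] at e ⊢
      · linear_combination e
      · split_ifs at e with h1
        simp only [Option.some.injEq] at e
        exact h1 (by linear_combination e)
      · split_ifs at e with h1
        simp only [Option.some.injEq] at e
        exact h1 (by linear_combination -e)
      · split_ifs at e with h1 h2 h2
        · rw [h1, h2]
        · simp only [Option.some.injEq] at e
          linear_combination -e
    · rintro (_ | j)
      · rfl
      · simp only
        rw [if_neg]
        · congr 1; ring
        · intro e
          exact hne (by linear_combination e)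
    · rintro (_ | k) (_ | l)
      · exact ⟨none, rfl⟩
      · refine ⟨some (l - h), ?_⟩
        simp
      · refine ⟨some (k + h), ?_⟩
        simp
      · by_cases hl : l = k + 1
        · exact ⟨none, by simp [hl]⟩
        · refine ⟨some (h * (k + l)), ?_⟩
          simp only
          rw [if_neg]
          · congr 1
            linear_combination (k + l) * hh
          · intro e
            apply hl
            linear_combination (-2 : ZMod (2 * s + 1)) * e - (k + l) * hh + hh
    · rintro (_ | j) (_ | j') (_ | k) e <;> simp only [reduceCtorEq, Option.some.injEq] at e ⊢
      · split_ifs at e with h1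
        simp only [Option.some.injEq] at e
        apply h1
        linear_combination h * e - (k - j') * hh
      · split_ifs at e with h1
        simp only [Option.some.injEq] at e
        apply h1
        linear_combination (-h) * e - (k - j) * hh
      · linear_combination e
      · split_ifs at e with h1 h2 h2
        · linear_combination h2 - h1
        · simp only [Option.some.injEq] at e
          linear_combination h * e - (j - j') * hh
  · obtain ⟨h, hh⟩ := hodd s'
    refine ⟨ZMod (2 * s' + 1), inferInstance, inferInstance, fun j k => 2 * j - k, ?_, ?_, ?_, ?_, ?_⟩
    · exact ZMod.card _
    · intro j k l e
      simp only at e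
      linear_combination -e
    · intro j
      simp only
      ring
    · intro k l
      refine ⟨h * (k + l), ?_⟩
      linear_combination (k + l) * hh
    · intro j j' k e
      simp only at e
      linear_combination h * e - (j - j') * hh

/-- first matching of the `j`-th factor -/
def bigP {α : Type} [DecidableEq α] (τ : α → α → α) (j : α) : Option (α × Bool) → Option (α × Bool)
  | none => some (j, false)
  | some (k, b) => if k = j then (if b then none else some (j, true)) else some (τ j k, b)

/-- second matching of the `j`-th factor -/
def bigR {α : Type} [DecidableEq α] (τ : α → α → α) (j : α) : Option (α × Bool) → Option (α × Bool)
  | none => some (j, true)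
  | some (k, b) => if k = j then (if b then some (j, false) else none) else some (τ j k, !b)

lemma bigP_inj {α : Type} [DecidableEq α] (τ : α → α → α) (j : α)
    (h1 : Function.Injective (τ j)) (h2 : τ j j = j) : Function.Injective (bigP τ j) := by
  have h3 : ∀ k, τ j k = j → k = j := fun k h => h1 (h.trans h2.symm)
  have h4 : ∀ k l, τ j k = τ j l → k = l := fun k l h => h1 h
  rintro (_ | ⟨k, _ | _⟩) (_ | ⟨l, _ | _⟩) e <;> simp only [bigP] at e ⊢ <;> grind

lemma bigR_inj {α : Type} [DecidableEq α] (τ : α → α → α) (j : α)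
    (h1 : Function.Injective (τ j)) (h2 : τ j j = j) : Function.Injective (bigR τ j) := by
  have h3 : ∀ k, τ j k = j → k = j := fun k h => h1 (h.trans h2.symm)
  have h4 : ∀ k l, τ j k = τ j l → k = l := fun k l h => h1 h
  rintro (_ | ⟨k, _ | _⟩) (_ | ⟨l, _ | _⟩) e <;> simp only [bigR] at e ⊢ <;> grind

lemma big_ne {α : Type} [DecidableEq α] (τ : α → α → α) (h2 : ∀ j, τ j j = j)
    (h3 : ∀ j j' k, τ j k = τ j' k → j = j') (j : α) (x : Option (α × Bool)) :
    bigP τ j x ≠ x ∧ bigR τ j x ≠ x ∧ bigP τ j x ≠ bigR τ j x := by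
  have h4 : ∀ k, τ j k = k → j = k := fun k h => h3 j k k (h.trans (h2 k).symm)
  rcases x with (_ | ⟨k, _ | _⟩) <;> simp only [bigP, bigR] <;> grind

lemma big_unique {α : Type} [DecidableEq α] (τ : α → α → α) (h2 : ∀ j, τ j j = j)
    (h3 : ∀ j j' k, τ j k = τ j' k → j = j') (h5 : ∀ k l, ∃ j, τ j k = l)
    (x y : Option (α × Bool)) (hxy : y ≠ x) :
    ∃! jb : α × Bool, (if jb.2 then bigP τ jb.1 x else bigR τ jb.1 x) = y := by
  have h4 : ∀ j k, τ j k = k → j = k := fun j k h => h3 j k k (h.trans (h2 k).symm)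
  rcases x with (_ | ⟨k, b⟩)
  · rcases y with (_ | ⟨l, c⟩)
    · exact absurd rfl hxy
    · refine ⟨(l, !c), ?_, ?_⟩
      · cases c <;> simp [bigP, bigR]
      · rintro ⟨j, _ | _⟩ e <;> cases c <;> simp [bigP, bigR] at e ⊢ <;> exact e
  · rcases y with (_ | ⟨l, c⟩)
    · refine ⟨(k, b), ?_, ?_⟩
      · cases b <;> simp [bigP, bigR]
      · rintro ⟨j, _ | _⟩ e <;> cases b <;> simp [bigP, bigR] at e ⊢ <;> grind
    · by_cases hkl : k = l
      · subst hkl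
        refine ⟨(k, c), ?_, ?_⟩
        · cases b <;> cases c <;> simp [bigP, bigR] at hxy ⊢
        · rintro ⟨j, _ | _⟩ e <;> cases b <;> cases c <;> simp [bigP, bigR] at e hxy ⊢ <;> grind
      · obtain ⟨j, hj⟩ := h5 k l
        have hkj : k ≠ j := by
          rintro rfl
          exact hkl ((h2 k).symm.trans hj)
        refine ⟨(j, b == c), ?_, ?_⟩
        · cases b <;> cases c <;> simp [bigP, bigR, hkj, hj]
        · rintro ⟨j', x⟩ e
          have h6 : τ j' k = l → j' = j := fun h => h3 _ _ _ (h.trans hj.symm)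
          cases x <;> cases b <;> cases c <;> simp [bigP, bigR] at e ⊢ <;> grind

/-- the four vertices of the block `(k, τ k)` -/
def quad {α : Type} {n : ℕ} (σ : Option (α × Bool) ≃ Fin n) (τ : α → α) (k : α) :
    Fin n × Fin n × Fin n × Fin n :=
  (σ (some (k, false)), σ (some (k, true)), σ (some (τ k, false)), σ (some (τ k, true)))

lemma chunk_bound {α : Type} [Fintype α] [DecidableEq α] {n : ℕ} (M : Fin n → Fin n → ℤ)
    (hn : Fintype.card (Option (α × Bool)) = n)
    (η : ℝ) (hη : 0 < η) (hG : 4 * η * (n : ℝ) ^ 4 ≤ (univ.filter (Sw M)).card)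
    (τ : α → α) (hτ : Function.Injective τ) (r : ℕ) (κ : Fin r → α)
    (hκ : Function.Injective κ) (hd : ∀ i i', τ (κ i) ≠ κ i') :
    ((univ.filter fun σ : Option (α × Bool) ≃ Fin n =>
      ((univ.filter fun i => Sw M (quad σ τ (κ i))).card : ℝ) < 7 / 2 * η * r).card : ℝ)
      ≤ (n : ℝ) ^ (4 * r) * Real.exp (-η / 60) ^ r * (n - 4 * r).factorial := by
  classical
  set B := univ.filter fun f : Fin r → (Fin n × Fin n × Fin n × Fin n) =>
      ((univ.filter fun i => f i ∈ univ.filter (Sw M)).card : ℝ) < 7 / 2 * η * r with hB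
  have hcW : (Fintype.card (Fin n × Fin n × Fin n × Fin n) : ℝ) = (n : ℝ) ^ 4 := by
    simp only [Fintype.card_prod, Fintype.card_fin]; push_cast; ring
  have hch := chernoff (univ.filter (Sw M)) η hη (by rw [hcW]; exact hG) r
  rw [← hB, hcW, ← pow_mul] at hch
  let e : Fin r × Bool × Bool → Option (α × Bool) := fun x =>
    some (if x.2.1 then τ (κ x.1) else κ x.1, x.2.2)
  have he : Function.Injective e := by
    rintro ⟨i, a, b⟩ ⟨i', a', b'⟩ h
    simp only [e, Option.some.injEq, Prod.mk.injEq] at h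
    obtain ⟨h1, rfl⟩ := h
    cases a <;> cases a' <;> simp only [if_true, if_false, Bool.false_eq_true] at h1
    · rw [hκ h1]
    · exact absurd h1.symm (hd _ _)
    · exact absurd h1 (hd _ _)
    · rw [hκ (hτ h1)]
  let g : (Fin r → (Fin n × Fin n × Fin n × Fin n)) → Fin r × Bool × Bool → Fin n :=
    fun f x => if x.2.1 then (if x.2.2 then (f x.1).2.2.2 else (f x.1).2.2.1)
      else (if x.2.2 then (f x.1).2.1 else (f x.1).1)
  have hsub : (univ.filter fun σ : Option (α × Bool) ≃ Fin n =>
      ((univ.filter fun i => Sw M (quad σ τ (κ i))).card : ℝ) < 7 / 2 * η * r) ⊆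
      B.biUnion fun f => univ.filter fun σ : Option (α × Bool) ≃ Fin n =>
        ∀ x, σ (e x) = g f x := by
    intro σ hσ
    rw [mem_filter] at hσ
    rw [mem_biUnion]
    refine ⟨fun i => quad σ τ (κ i), ?_, ?_⟩
    · rw [hB, mem_filter]
      refine ⟨mem_univ _, ?_⟩
      simpa using hσ.2
    · rw [mem_filter]
      refine ⟨mem_univ _, ?_⟩
      rintro ⟨i, a, b⟩
      cases a <;> cases b <;> simp [e, g, quad]
  have hc := (card_le_card hsub).trans
    (card_biUnion_le_card_mul B _ ((n - 4 * r).factorial) (fun f _ => by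
      have := fibre_card e he (g f)
      rw [hn] at this
      simp only [Fintype.card_prod, Fintype.card_fin, Fintype.card_bool] at this
      rwa [show r * (2 * 2) = 4 * r by ring] at this))
  have hc' : ((univ.filter fun σ : Option (α × Bool) ≃ Fin n =>
      ((univ.filter fun i => Sw M (quad σ τ (κ i))).card : ℝ) < 7 / 2 * η * r).card : ℝ)
      ≤ (B.card : ℝ) * (n - 4 * r).factorial := by exact_mod_cast hc
  refine hc'.trans ?_
  gcongr

lemma factorial_bound (n t : ℕ) (h : 2 * t ^ 2 ≤ n) (hn : 0 < n) :
    (n : ℝ) ^ t * (n - t).factorial ≤ 2 * n.factorial := by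
  have htn : t ≤ n := by nlinarith
  have h1 := Nat.factorial_mul_descFactorial htn
  have h2 := Nat.pow_sub_le_descFactorial n t
  have hn' : (0 : ℝ) < n := by exact_mod_cast hn
  have h3 : (1 : ℝ) / 2 ≤ (1 + (-(t : ℝ) / n)) ^ t := by
    have hb := one_add_mul_le_pow (a := -(t : ℝ) / n) (by
      rw [le_div_iff₀ hn']
      have : (t : ℝ) ≤ n := by exact_mod_cast htn
      linarith) t
    refine le_trans ?_ hb
    have : (2 : ℝ) * t ^ 2 ≤ n := by exact_mod_cast h
    have h4 : (t : ℝ) * (-(t : ℝ) / n) = -((t : ℝ) ^ 2 / n) := by ring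
    rw [h4]
    have : (t : ℝ) ^ 2 / n ≤ 1 / 2 := by
      rw [div_le_iff₀ hn']; linarith
    linarith
  have h4 : (n : ℝ) ^ t ≤ 2 * (n.descFactorial t : ℝ) := by
    have h5 : ((n + 1 - t : ℕ) : ℝ) ^ t ≤ (n.descFactorial t : ℝ) := by exact_mod_cast h2
    have h6 : ((n : ℝ) * (1 + (-(t : ℝ) / n))) ^ t ≤ ((n + 1 - t : ℕ) : ℝ) ^ t := by
      have : (n : ℝ) * (1 + (-(t : ℝ) / n)) = n - t := by field_simp; ring
      rw [this]
      have hle : (t : ℝ) ≤ n := by exact_mod_cast htn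
      apply pow_le_pow_left₀ (by linarith)
      rw [Nat.cast_sub (by omega)]
      push_cast
      linarith
    rw [mul_pow] at h6
    have h7 : (0 : ℝ) ≤ (n : ℝ) ^ t := by positivity
    nlinarith
  have h8 : ((n - t).factorial : ℝ) * n.descFactorial t = n.factorial := by exact_mod_cast h1
  rw [← h8]
  have : (0 : ℝ) ≤ (n - t).factorial := by positivity
  nlinarith

lemma exists_sigma {α : Type} [Fintype α] [DecidableEq α] {n m : ℕ} (M : Fin n → Fin n → ℤ)
    (hm : Fintype.card α = m) (hnm : n = 2 * m + 1)
    (η : ℝ) (hη : 0 < η) (hG : 4 * η * (n : ℝ) ^ 4 ≤ (univ.filter (Sw M)).card)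
    (τ : α → α → α) (hτ : ∀ j, Function.Injective (τ j)) (hid : ∀ j, τ j j = j)
    (hfix : ∀ j k, τ j k = k → k = j) (r : ℕ) (hr : 1 ≤ r) (hrn : 64 * r ^ 2 ≤ n)
    (hexp : 2 * (n : ℝ) ^ 2 * Real.exp (-η / 60) ^ r < 1) :
    ∃ σ : Option (α × Bool) ≃ Fin n, ∀ j,
      η * n / 2 ≤ ((univ.filter fun k => k ≠ j ∧ Sw M (quad σ (τ j) k)).card : ℝ) := by
  classical
  have hn : Fintype.card (Option (α × Bool)) = n := by
    rw [Fintype.card_option, Fintype.card_prod, hm, Fintype.card_bool]; omega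
  obtain ⟨q, hq⟩ : ∃ q, q = ((m - 1) / 3) / r := ⟨_, rfl⟩
  have hq1 : q * r ≤ (m - 1) / 3 := by rw [hq]; exact Nat.div_mul_le_self _ _
  have hq2 : (m - 1) / 3 < q * r + r := by
    have := Nat.lt_div_mul_add (a := (m - 1) / 3) (b := r) (by omega)
    rwa [← hq] at this
  have h7 : n ≤ 7 * (q * r) := by
    have : 49 * r ≤ n := by nlinarith
    omega
  have hqn : q ≤ n := by
    have : q ≤ q * r := Nat.le_mul_of_pos_right _ hr
    omega
  have hex : ∀ j, ∃ κ : Fin q × Fin r → α, Function.Injective κ ∧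
      ∀ x y, τ j (κ x) ≠ κ y := by
    intro j
    obtain ⟨S, hS, hc⟩ := greedy_matching (τ j) (hτ j) j (hfix j)
    have hle : Fintype.card (Fin q × Fin r) ≤ Fintype.card S := by
      simp only [Fintype.card_prod, Fintype.card_fin, Fintype.card_coe]
      omega
    obtain ⟨f⟩ := Function.Embedding.nonempty_of_card_le hle
    exact ⟨fun x => (f x).1, Subtype.val_injective.comp f.injective,
      fun x y => hS _ (f x).2 _ (f y).2⟩
  choose κ hκ hd using hex
  let Bad : α × Fin q → Finset (Option (α × Bool) ≃ Fin n) := fun jc =>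
    univ.filter fun σ : Option (α × Bool) ≃ Fin n =>
      ((univ.filter fun i => Sw M (quad σ (τ jc.1) (κ jc.1 (jc.2, i)))).card : ℝ)
        < 7 / 2 * η * r
  have hbad : ∀ jc, ((Bad jc).card : ℝ) ≤
      (n : ℝ) ^ (4 * r) * Real.exp (-η / 60) ^ r * (n - 4 * r).factorial := by
    rintro ⟨j, c⟩
    exact chunk_bound M hn η hη hG (τ j) (hτ j) r (fun i => κ j (c, i))
      (fun i i' h => by simpa using hκ j h) (fun i i' => hd j _ _)
  have hunion : ((univ.biUnion Bad).card : ℝ) < n.factorial := by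
    have h1 : ((univ.biUnion Bad).card : ℝ) ≤ ∑ jc, ((Bad jc).card : ℝ) := by
      exact_mod_cast card_biUnion_le
    have h2 : ∑ jc, ((Bad jc).card : ℝ) ≤ (m * q : ℝ) *
        ((n : ℝ) ^ (4 * r) * Real.exp (-η / 60) ^ r * (n - 4 * r).factorial) := by
      refine (sum_le_sum fun jc _ => hbad jc).trans (le_of_eq ?_)
      simp [hm]
    have h3 := factorial_bound n (4 * r) (by nlinarith) (by omega)
    have h4 : (m * q : ℝ) ≤ (n : ℝ) ^ 2 := by
      have : m * q ≤ n ^ 2 := by nlinarith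
      exact_mod_cast this
    have h5 : (0 : ℝ) < n.factorial := by exact_mod_cast Nat.factorial_pos n
    have h6 : (0 : ℝ) ≤ Real.exp (-η / 60) ^ r := by positivity
    calc ((univ.biUnion Bad).card : ℝ) ≤ _ := h1.trans h2
      _ = (m * q : ℝ) * Real.exp (-η / 60) ^ r *
          ((n : ℝ) ^ (4 * r) * (n - 4 * r).factorial) := by ring
      _ ≤ (n : ℝ) ^ 2 * Real.exp (-η / 60) ^ r * (2 * n.factorial) := by gcongr
      _ = (2 * (n : ℝ) ^ 2 * Real.exp (-η / 60) ^ r) * n.factorial := by ring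
      _ < 1 * n.factorial := by gcongr
      _ = _ := one_mul _
  have hcard : Fintype.card (Option (α × Bool) ≃ Fin n) = n.factorial := by
    rw [Fintype.card_equiv (Fintype.equivFinOfCardEq hn), hn]
  obtain ⟨σ, hσ⟩ : ∃ σ, σ ∉ univ.biUnion Bad := by
    by_contra! hcon
    have : univ.biUnion Bad = univ := eq_univ_iff_forall.2 hcon
    rw [this, card_univ, hcard] at hunion
    exact lt_irrefl _ hunion
  refine ⟨σ, fun j => ?_⟩
  have hgood : ∀ c, 7 / 2 * η * r ≤
      ((univ.filter fun i => Sw M (quad σ (τ j) (κ j (c, i)))).card : ℝ) := by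
    intro c
    by_contra! hcon
    exact hσ (mem_biUnion.2 ⟨(j, c), mem_univ _, mem_filter.2 ⟨mem_univ _, hcon⟩⟩)
  have hc1 : (univ.filter fun x => Sw M (quad σ (τ j) (κ j x))).card ≤
      (univ.filter fun k => k ≠ j ∧ Sw M (quad σ (τ j) k)).card := by
    refine card_le_card_of_injOn (κ j) ?_ (hκ j).injOn
    intro x hx
    simp only [coe_filter, mem_univ, true_and, Set.mem_ofPred_eq] at hx ⊢
    refine ⟨fun h => hd j x x ?_, hx⟩
    rw [h, hid]
  have hc2 : ((univ.filter fun x => Sw M (quad σ (τ j) (κ j x))).card : ℝ) =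
      ∑ c, ((univ.filter fun i => Sw M (quad σ (τ j) (κ j (c, i)))).card : ℝ) := by
    simp only [card_filter]
    push_cast
    rw [Fintype.sum_prod_type]
  have hc3 : (q : ℝ) * (7 / 2 * η * r) ≤
      ∑ c, ((univ.filter fun i => Sw M (quad σ (τ j) (κ j (c, i)))).card : ℝ) := by
    refine le_trans (le_of_eq ?_) (sum_le_sum fun c _ => hgood c)
    simp
  have hc1' : ((univ.filter fun x => Sw M (quad σ (τ j) (κ j x))).card : ℝ) ≤
      (univ.filter fun k => k ≠ j ∧ Sw M (quad σ (τ j) k)).card := by exact_mod_cast hc1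
  have h7' : (n : ℝ) ≤ 7 * (q * r) := by exact_mod_cast h7
  nlinarith

lemma exists_r (η : ℝ) (hη : 0 < η) : ∃ n₀ : ℕ, ∀ n, n₀ ≤ n → ∃ r, 1 ≤ r ∧ 64 * r ^ 2 ≤ n ∧
    2 * (n : ℝ) ^ 2 * Real.exp (-η / 60) ^ r < 1 := by
  have hβ1 : Real.exp (-η / 60) < 1 := by
    rw [Real.exp_lt_one_iff]; linarith
  have hβ0 := Real.exp_pos (-η / 60)
  set β := Real.exp (-η / 60)
  have ht := tendsto_pow_const_mul_const_pow_of_abs_lt_one 4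
    (show |β| < 1 by rwa [abs_of_pos hβ0])
  have hev := ht.eventually (gt_mem_nhds (show (0 : ℝ) < 1 / 131072 by norm_num))
  obtain ⟨r0, hr0⟩ := Filter.eventually_atTop.1 hev
  refine ⟨(8 * (r0 + 1)) ^ 2, fun n hn => ⟨Nat.sqrt n / 8, ?_, ?_, ?_⟩⟩
  all_goals
    have h1 : 8 * (r0 + 1) ≤ Nat.sqrt n := Nat.le_sqrt'.2 hn
    obtain ⟨r, hr⟩ : ∃ r, r = Nat.sqrt n / 8 := ⟨_, rfl⟩
    rw [← hr]
    have h2 : r0 + 1 ≤ r := by omega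
  · omega
  · have h3 : Nat.sqrt n ^ 2 ≤ n := Nat.sqrt_le' n
    have h4 : 8 * r ≤ Nat.sqrt n := by omega
    nlinarith
  · have h3 : n < (Nat.sqrt n + 1) ^ 2 := Nat.lt_succ_sqrt' n
    have h4 : Nat.sqrt n + 1 ≤ 16 * r := by omega
    have h5 : n ≤ 256 * r ^ 2 := by nlinarith
    have h6 : (n : ℝ) ≤ 256 * (r : ℝ) ^ 2 := by exact_mod_cast h5
    have h7 := hr0 r (by omega)
    have h8 : (n : ℝ) ^ 2 ≤ (256 * (r : ℝ) ^ 2) ^ 2 := pow_le_pow_left₀ (by positivity) h6 2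
    have h9 : 0 < β ^ r := by positivity
    nlinarith

theorem odd_case_switcher_rich_two_factorization :
    ∀ η : ℝ, 0 < η →
    ∃ n₀ : ℕ, ∀ n : ℕ, n₀ ≤ n → Odd n →
    ∀ M : Fin n → Fin n → ℤ, IsSigning n M →
    (switcherCount n M : ℝ) ≥ η * n ^ 4 →
    ∃ π ρ : Fin ((n - 1) / 2) → Equiv.Perm (Fin n),
      (∀ j i, π j i ≠ i ∧ ρ j i ≠ i ∧ π j i ≠ ρ j i) ∧
      (∀ i k : Fin n, k ≠ i →
        ∃! jb : Fin ((n - 1) / 2) × Bool,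
          (if jb.2 then π jb.1 i else ρ jb.1 i) = k) ∧
      (∀ j, ((univ.filter fun p : Fin n × Fin n =>
          p.1 < p.2 ∧ (ρ j)⁻¹ (π j p.1) = p.2 ∧ (ρ j)⁻¹ (π j p.2) = p.1 ∧
            M p.1 (π j p.1) + M p.2 (π j p.2) ≠
              M p.1 (ρ j p.1) + M p.2 (ρ j p.2)).card : ℝ) ≥ η * n / 2) := by
  intro η hη
  obtain ⟨n₀, hn₀⟩ := exists_r η hη
  refine ⟨max n₀ 9, fun n hn hodd M _ hM => ?_⟩
  obtain ⟨r, hr1, hr2, hr3⟩ := hn₀ n (le_trans (le_max_left _ _) hn)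
  have hn9 : 9 ≤ n := le_trans (le_max_right _ _) hn
  obtain ⟨m, hnm⟩ := hodd
  obtain ⟨α, iF, iD, τ, hα, hτ, hid, hex, huniq⟩ := exists_idem_latin m (by omega)
  have hfix : ∀ j k, τ j k = k → k = j := fun j k h =>
    (huniq j k k (h.trans (hid k).symm)).symm
  have hG : 4 * η * (n : ℝ) ^ 4 ≤ (univ.filter (Sw M)).card := by
    have h4 : (4 : ℝ) * switcherCount n M ≤ (univ.filter (Sw M)).card := by
      exact_mod_cast four_mul_switcherCount M
    linarith
  obtain ⟨σ, hσ⟩ := exists_sigma M hα hnm η hη hG τ hτ hid hfix r hr1 hr2 hr3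
  have hm2 : (n - 1) / 2 = m := by omega
  let ι : Fin ((n - 1) / 2) ≃ α := (Fintype.equivFinOfCardEq (hα.trans hm2.symm)).symm
  let P : α → Equiv.Perm (Option (α × Bool)) := fun j =>
    Equiv.ofBijective (bigP τ j) (Finite.injective_iff_bijective.1 (bigP_inj τ j (hτ j) (hid j)))
  let R : α → Equiv.Perm (Option (α × Bool)) := fun j =>
    Equiv.ofBijective (bigR τ j) (Finite.injective_iff_bijective.1 (bigR_inj τ j (hτ j) (hid j)))
  have hP : ∀ j x, P j x = bigP τ j x := fun _ _ => rfl
  have hR : ∀ j x, R j x = bigR τ j x := fun _ _ => rfl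
  refine ⟨fun j => (σ.symm.trans (P (ι j))).trans σ, fun j => (σ.symm.trans (R (ι j))).trans σ,
    ?_, ?_, ?_⟩
  · intro j i
    obtain ⟨x, rfl⟩ := σ.surjective i
    have := big_ne τ hid huniq (ι j) x
    simpa [hP, hR] using this
  · intro i k hki
    obtain ⟨x, rfl⟩ := σ.surjective i
    obtain ⟨y, rfl⟩ := σ.surjective k
    obtain ⟨⟨j, b⟩, hj, hu⟩ := big_unique τ hid huniq hex x y (fun h => hki (by rw [h]))
    refine ⟨(ι.symm j, b), ?_, ?_⟩
    · cases b <;> simpa [hP, hR] using hj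
    · rintro ⟨j', b'⟩ h
      have := hu (ι j', b') (by cases b' <;> simpa [hP, hR] using h)
      rw [Prod.mk.injEq] at this
      rw [← this.1, ← this.2, Equiv.symm_apply_apply]
  · intro j
    refine le_trans (hσ (ι j)) ?_
    norm_cast
    let u : α → Bool → Fin n := fun k b => σ (some (k, b))
    have hu : ∀ k b k2 b2, u k b = u k2 b2 → k = k2 ∧ b = b2 := by
      intro k b k2 b2 h
      simpa [u] using h
    have key : ∀ k, k ≠ ι j → ∀ b,
        ((σ.symm.trans (P (ι j))).trans σ) (u k b) = u (τ (ι j) k) b ∧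
        ((σ.symm.trans (R (ι j))).trans σ) (u k b) = u (τ (ι j) k) (!b) := by
      intro k hk b
      simp [hP, hR, u, bigP, bigR, hk]
    have key2 : ∀ k, k ≠ ι j → ∀ b, ((σ.symm.trans (R (ι j))).trans σ)⁻¹
        (((σ.symm.trans (P (ι j))).trans σ) (u k b)) = u k (!b) := by
      intro k hk b
      rw [Equiv.Perm.inv_eq_iff_eq, (key k hk b).1, (key k hk (!b)).2, Bool.not_not]
    refine card_le_card_of_injOn (fun k => if u k false < u k true then (u k false, u k true)
      else (u k true, u k false)) ?_ ?_
    · intro k hk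
      simp only [coe_filter, mem_univ, true_and, Set.mem_ofPred_eq] at hk ⊢
      obtain ⟨hk, hs⟩ := hk
      have hs' : M (u k false) (u (τ (ι j) k) false) + M (u k true) (u (τ (ι j) k) true) ≠
        M (u k false) (u (τ (ι j) k) true) + M (u k true) (u (τ (ι j) k) false) := hs
      have hne : u k false ≠ u k true := fun h => by simpa using (hu _ _ _ _ h).2
      split_ifs with hlt
      · refine ⟨hlt, key2 k hk false, key2 k hk true, ?_⟩
        rw [(key k hk false).1, (key k hk false).2, (key k hk true).1, (key k hk true).2]
        exact hs'
      · refine ⟨lt_of_le_of_ne (not_lt.1 hlt) hne.symm, key2 k hk true, key2 k hk false, ?_⟩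
        rw [(key k hk false).1, (key k hk false).2, (key k hk true).1, (key k hk true).2]
        simp only [Bool.not_true, Bool.not_false]
        omega
    · intro k _ k' _ h
      simp only at h
      split_ifs at h <;> simp only [Prod.mk.injEq] at h <;> exact (hu _ _ _ _ h.1).1
end

section
/- Let M be a signing of K_{n,n}, viewed as an n × n matrix over ℤ. Then ∑ i, ∑ j, (∑ k, M i k · M j k)² = n⁴ − 8·s₂(M). Equivalently, the trace of (M·Mᵀ)² equals n⁴ − 8·s₂(M). -/
open Finset

/-- `s₂(M)`: the number of Type-2 switchers of `M`, i.e. quadruples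
`(a, c, b, d)` with `a < c`, `b < d` and `M a b * M a d * M c b * M c d = -1`. -/
def type2SwitcherCount (n : ℕ) (M : Fin n → Fin n → ℤ) : ℕ :=
  (univ.filter fun p : Fin n × Fin n × Fin n × Fin n =>
    p.1 < p.2.1 ∧ p.2.2.1 < p.2.2.2 ∧
      M p.1 p.2.2.1 * M p.1 p.2.2.2 * M p.2.1 p.2.2.1 * M p.2.1 p.2.2.2 = -1).card

/-- A symmetric function vanishing on the diagonal sums to twice its upper part. -/
theorem sum_symm_offdiag (n : ℕ) (f : Fin n → Fin n → ℤ) (hs : ∀ a c, f a c = f c a)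
    (h0 : ∀ a, f a a = 0) :
    ∑ a, ∑ c, f a c = 2 * ∑ a, ∑ c, if a < c then f a c else 0 := by
  have h1 : ∑ a, ∑ c, f a c =
      ∑ a, ∑ c, ((if a < c then f a c else 0) + (if c < a then f c a else 0)) := by
    refine sum_congr rfl fun a _ => sum_congr rfl fun c _ => ?_
    rcases lt_trichotomy a c with h | h | h
    · simp [h, h.not_gt]
    · subst h; simp [h0]
    · simp [h, h.not_gt, hs a c]
  rw [h1]
  simp only [sum_add_distrib]
  rw [sum_comm (f := fun a c => if c < a then f c a else 0)]
  ring

theorem fourth_moment_sum (n : ℕ) (M : Fin n → Fin n → ℤ)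
    (hM : IsSigning n M) :
    (∑ i, ∑ j, (∑ k, M i k * M j k) ^ 2) =
      (n : ℤ) ^ 4 - 8 * type2SwitcherCount n M := by
  have hsq : ∀ i j, M i j * M i j = 1 := by
    intro i j
    rcases hM i j with h | h <;> simp [h]
  have e1 : ∑ a, ∑ c, ∑ b, ∑ d, (1 - M a b * M a d * M c b * M c d) =
      (n : ℤ) ^ 4 - ∑ i, ∑ j, (∑ k, M i k * M j k) ^ 2 := by
    simp only [sum_sub_distrib]
    congr 1
    · simp; ring
    · refine sum_congr rfl fun a _ => sum_congr rfl fun c _ => ?_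
      rw [sq, sum_mul_sum]
      refine sum_congr rfl fun b _ => sum_congr rfl fun d _ => ?_
      ring
  have e2 : ∑ a, ∑ c, ∑ b, ∑ d, (1 - M a b * M a d * M c b * M c d) =
      8 * (type2SwitcherCount n M : ℤ) := by
    rw [sum_symm_offdiag n (fun a c => ∑ b, ∑ d, (1 - M a b * M a d * M c b * M c d))]
    rotate_left
    · intro a c
      refine sum_congr rfl fun b _ => sum_congr rfl fun d _ => ?_
      ring
    · intro a
      refine sum_eq_zero fun b _ => sum_eq_zero fun d _ => ?_
      linear_combination (-1 : ℤ) * hsq a b * (M a d * M a d) - hsq a d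
    have e3 : ∀ a c, ∑ b, ∑ d, (1 - M a b * M a d * M c b * M c d) =
        2 * ∑ b, ∑ d, if b < d then (1 - M a b * M a d * M c b * M c d) else 0 := by
      intro a c
      apply sum_symm_offdiag n (fun b d => (1 - M a b * M a d * M c b * M c d))
      · intro b d
        ring
      · intro b
        linear_combination (-1 : ℤ) * hsq a b * (M c b * M c b) - hsq c b
    simp only [e3]
    unfold type2SwitcherCount
    rw [card_filter]
    push_cast
    simp only [Fintype.sum_prod_type]
    rw [mul_sum, mul_sum]
    refine sum_congr rfl fun a _ => ?_
    rw [mul_sum, mul_sum]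
    refine sum_congr rfl fun c _ => ?_
    by_cases hac : a < c
    · simp only [hac, if_true, true_and, mul_sum]
      refine sum_congr rfl fun b _ => sum_congr rfl fun d _ => ?_
      by_cases hbd : b < d
      · rcases hM a b with h1 | h1 <;> rcases hM a d with h2 | h2 <;>
        rcases hM c b with h3 | h3 <;> rcases hM c d with h4 | h4 <;>
        norm_num [h1, h2, h3, h4, hbd]
      · simp [hbd]
    · simp [hac]
  linarith

theorem fourth_moment_identity (n : ℕ) (M : Fin n → Fin n → ℤ)
    (hM : IsSigning n M) :
    (∑ i, ∑ j, (∑ k, M i k * M j k) ^ 2) =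
      (n : ℤ) ^ 4 - 8 * type2SwitcherCount n M ∧
    Matrix.trace ((Matrix.of M * Matrix.transpose (Matrix.of M)) ^ 2) =
      (n : ℤ) ^ 4 - 8 * type2SwitcherCount n M := by
  refine ⟨fourth_moment_sum n M hM, ?_⟩
  rw [← fourth_moment_sum n M hM]
  simp only [Matrix.trace, Matrix.diag, sq, Matrix.mul_apply, Matrix.transpose_apply,
    Matrix.of_apply]
  refine sum_congr rfl fun i _ => sum_congr rfl fun j _ => ?_
  congr 1
  exact sum_congr rfl fun k _ => mul_comm _ _
end

section
/- Let M be a signing of K_{n,n} with n ≥ 1, viewed as a real n × n matrix. Then the largest singular value σ₁ of M (equivalently, the ℓ²→ℓ² operator norm of M) satisfies σ₁² · n² ≥ n⁴ − 8·s₂(M). In particular, if s₂(M) ≤ α²·n⁴/64 for some real α ≥ 0, then σ₁ ≥ n·√(1 − α²/8). -/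
open Finset

/-- The largest singular value of `M`, i.e. the `ℓ² → ℓ²` operator norm of `M`
viewed as a real matrix acting on Euclidean space. -/
noncomputable def sigma1 (n : ℕ) (M : Fin n → Fin n → ℤ) : ℝ :=
  ‖LinearMap.toContinuousLinearMap
    (Matrix.toEuclideanLin (Matrix.of fun i j : Fin n => (M i j : ℝ)))‖


lemma sum_symm_aux (n : ℕ) (g : Fin n → Fin n → ℝ) (hs : ∀ a c, g a c = g c a)
    (hd : ∀ a, g a a = 0) :
    ∑ a, ∑ c, g a c = 2 * ∑ a, ∑ c, (if a < c then g a c else 0) := by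
  have h1 : ∀ a c, g a c = (if a < c then g a c else 0) + (if c < a then g c a else 0) := by
    intro a c
    rcases lt_trichotomy a c with h | h | h
    · simp [h, h.not_gt]
    · subst h; simp [hd]
    · simp [h, h.not_gt, hs a c]
  calc ∑ a, ∑ c, g a c
      = ∑ a, ∑ c, ((if a < c then g a c else 0) + (if c < a then g c a else 0)) :=
        Finset.sum_congr rfl fun a _ => Finset.sum_congr rfl fun c _ => h1 a c
    _ = ∑ a, ∑ c, (if a < c then g a c else 0) + ∑ a, ∑ c, (if c < a then g c a else 0) := by
        simp only [Finset.sum_add_distrib]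
    _ = _ := by
        rw [Finset.sum_comm (f := fun a c => if c < a then g c a else 0)]
        ring

lemma count_aux (n : ℕ) (M : Fin n → Fin n → ℤ) (hM : IsSigning n M) :
    ∑ a, ∑ c, ∑ b, ∑ d, ((M a b : ℝ) * M a d * M c b * M c d)
      = (n : ℝ) ^ 4 - 8 * type2SwitcherCount n M := by
  let f : Fin n → Fin n → Fin n → Fin n → ℝ := fun a c b d =>
    if M a b * M a d * M c b * M c d = -1 then 1 else 0
  have hf : ∀ a c b d, ((M a b : ℝ) * M a d * M c b * M c d) = 1 - 2 * f a c b d := by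
    intro a c b d
    rcases hM a b with h1 | h1 <;> rcases hM a d with h2 | h2 <;> rcases hM c b with h3 | h3 <;>
      rcases hM c d with h4 | h4 <;> simp [f, h1, h2, h3, h4] <;> norm_num
  have s1 : ∀ a c, ∑ b, ∑ d, f a c b d = 2 * ∑ b, ∑ d, (if b < d then f a c b d else 0) := by
    intro a c
    apply sum_symm_aux
    · intro b d
      simp only [f]
      congr 2
      ring
    · intro b
      rcases hM a b with h1 | h1 <;> rcases hM c b with h3 | h3 <;> simp [f, h1, h3]
  have s2 : ∑ a, ∑ c, ∑ b, ∑ d, f a c b d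
      = 2 * ∑ a, ∑ c, (if a < c then ∑ b, ∑ d, f a c b d else 0) := by
    apply sum_symm_aux n (fun a c => ∑ b, ∑ d, f a c b d)
    · intro a c
      refine Finset.sum_congr rfl fun b _ => Finset.sum_congr rfl fun d _ => ?_
      simp only [f]
      congr 2
      ring
    · intro a
      refine Finset.sum_eq_zero fun b _ => Finset.sum_eq_zero fun d _ => ?_
      rcases hM a b with h1 | h1 <;> rcases hM a d with h3 | h3 <;> simp [f, h1, h3]
  have s3 : (type2SwitcherCount n M : ℝ)
      = ∑ a, ∑ c, (if a < c then ∑ b, ∑ d, (if b < d then f a c b d else 0) else 0) := by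
    unfold type2SwitcherCount
    rw [Finset.card_filter]
    push_cast
    simp only [Fintype.sum_prod_type]
    refine Finset.sum_congr rfl fun a _ => Finset.sum_congr rfl fun c _ => ?_
    by_cases h : a < c
    · simp only [h, true_and, if_true]
      refine Finset.sum_congr rfl fun b _ => Finset.sum_congr rfl fun d _ => ?_
      simp only [f, ite_and]
    · simp [h]
  have s4 : ∑ a, ∑ c, ∑ b, ∑ d, f a c b d = 4 * type2SwitcherCount n M := by
    rw [s2, s3]
    simp only [s1]
    simp only [← mul_ite_zero, ← Finset.mul_sum]
    ring
  simp only [hf, Finset.sum_sub_distrib, ← Finset.mul_sum]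
  rw [s4]
  simp
  ring

lemma norm_aux (n : ℕ) (M : Fin n → Fin n → ℤ) (hM : IsSigning n M) :
    ∑ a, ∑ c, ∑ b, ∑ d, ((M a b : ℝ) * M a d * M c b * M c d) ≤ sigma1 n M ^ 2 * n ^ 2 := by
  have key : ∀ c, ∑ a, ∑ b, ∑ d, ((M a b : ℝ) * M a d * M c b * M c d)
      ≤ sigma1 n M ^ 2 * n := by
    intro c
    let v : EuclideanSpace ℝ (Fin n) := WithLp.toLp 2 fun b => (M c b : ℝ)
    have h := (LinearMap.toContinuousLinearMap
      (Matrix.toEuclideanLin (Matrix.of fun i j : Fin n => (M i j : ℝ)))).le_opNorm v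
    have hv : ‖v‖ ^ 2 = n := by
      rw [EuclideanSpace.real_norm_sq_eq]
      have : ∀ b, (v b) ^ 2 = 1 := by
        intro b
        rcases hM c b with h1 | h1 <;> simp [v, h1]
      simp [this]
    have h2 := pow_le_pow_left₀ (norm_nonneg _) h 2
    rw [mul_pow, hv, EuclideanSpace.real_norm_sq_eq] at h2
    refine le_trans (le_of_eq ?_) h2
    refine Finset.sum_congr rfl fun a _ => ?_
    have : ((LinearMap.toContinuousLinearMap
      (Matrix.toEuclideanLin (Matrix.of fun i j : Fin n => (M i j : ℝ)))) v) a
        = ∑ b, (M a b : ℝ) * M c b := by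
      simp [v, Matrix.toLpLin_apply, Matrix.mulVec, dotProduct]
    rw [this, sq, Finset.sum_mul_sum]
    refine Finset.sum_congr rfl fun b _ => Finset.sum_congr rfl fun d _ => ?_
    ring
  rw [Finset.sum_comm]
  refine (Finset.sum_le_sum fun c _ => key c).trans (le_of_eq ?_)
  simp
  ring

theorem top_singular_value_lower_bound (n : ℕ) (hn : 1 ≤ n)
    (M : Fin n → Fin n → ℤ) (hM : IsSigning n M) :
    sigma1 n M ^ 2 * n ^ 2 ≥ (n : ℝ) ^ 4 - 8 * type2SwitcherCount n M ∧
    ∀ α : ℝ, 0 ≤ α → (type2SwitcherCount n M : ℝ) ≤ α ^ 2 * n ^ 4 / 64 →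
      sigma1 n M ≥ n * Real.sqrt (1 - α ^ 2 / 8) := by
  have h1 : sigma1 n M ^ 2 * n ^ 2 ≥ (n : ℝ) ^ 4 - 8 * type2SwitcherCount n M := by
    rw [← count_aux n M hM]
    exact norm_aux n M hM
  refine ⟨h1, fun α _ hs => ?_⟩
  have hσ : 0 ≤ sigma1 n M := norm_nonneg _
  have hn0 : (0 : ℝ) < n := by exact_mod_cast hn
  rcases le_total (1 - α ^ 2 / 8) 0 with h | h
  · rw [Real.sqrt_eq_zero_of_nonpos h]
    simpa using hσ
  · refine (sq_le_sq₀ (by positivity) hσ).mp ?_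
    rw [mul_pow, Real.sq_sqrt h]
    have h3 : (0 : ℝ) < (n : ℝ) ^ 2 := by positivity
    refine le_of_mul_le_mul_right ?_ h3
    nlinarith
end

section
/- Let x, y : Fin n → ℤ be vectors with all entries ±1, and let A be the rank-one sign matrix A i j = x i · y j. Then s₁(A) = x⁺·x⁻·y⁺·y⁻, where x⁺, x⁻ are the numbers of +1 and −1 entries of x, and y⁺, y⁻ are the numbers of +1 and −1 entries of y. -/
open Finset

/-- `s₁(A)`: the number of Type-1 switchers of `A`, i.e. quadruples
`(a, c, b, d)` with `a < c`, `b < d`, `A a b * A a d * A c b * A c d = 1`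
and `A a b + A c d ≠ A a d + A c b`. -/
def type1SwitcherCount (n : ℕ) (A : Fin n → Fin n → ℤ) : ℕ :=
  (univ.filter fun p : Fin n × Fin n × Fin n × Fin n =>
    p.1 < p.2.1 ∧ p.2.2.1 < p.2.2.2 ∧
      A p.1 p.2.2.1 * A p.1 p.2.2.2 * A p.2.1 p.2.2.1 * A p.2.1 p.2.2.2 = 1 ∧
      A p.1 p.2.2.1 + A p.2.1 p.2.2.2 ≠ A p.1 p.2.2.2 + A p.2.1 p.2.2.1).card

lemma pair_count_aux (n : ℕ) (x : Fin n → ℤ) (hx : ∀ i, x i = 1 ∨ x i = -1) :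
    (univ.filter fun p : Fin n × Fin n => p.1 < p.2 ∧ x p.1 ≠ x p.2).card =
      (univ.filter fun i => x i = 1).card * (univ.filter fun i => x i = -1).card := by
  rw [← card_product]
  refine card_bij' (fun p _ => if x p.1 = 1 then p else p.swap)
    (fun p _ => if p.1 < p.2 then p else p.swap) ?_ ?_ ?_ ?_
  · rintro ⟨a, b⟩ h
    simp only [mem_filter, mem_univ, true_and, mem_product] at h ⊢
    rcases hx a with ha | ha <;> rcases hx b with hb | hb <;> simp_all
  · rintro ⟨a, b⟩ h
    simp only [mem_filter, mem_univ, true_and, mem_product] at h ⊢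
    have hab : a ≠ b := by
      rintro rfl
      omega
    by_cases hlt : a < b
    · simp [hlt, h.1, h.2]
    · have hlt' : b < a := lt_of_le_of_ne (not_lt.mp hlt) hab.symm
      simp [hlt, hlt', h.1, h.2]
  · rintro ⟨a, b⟩ h
    simp only [mem_filter, mem_univ, true_and] at h
    have := h.1.not_gt
    by_cases ha : x a = 1 <;> simp [ha, h.1, this]
  · rintro ⟨a, b⟩ h
    simp only [mem_filter, mem_univ, true_and, mem_product] at h
    by_cases hlt : a < b <;> simp [hlt, h.1, h.2]

theorem type1_count_rank_one (n : ℕ) (x y : Fin n → ℤ)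
    (hx : ∀ i, x i = 1 ∨ x i = -1) (hy : ∀ j, y j = 1 ∨ y j = -1) :
    type1SwitcherCount n (fun i j => x i * y j) =
      (univ.filter fun i => x i = 1).card *
      (univ.filter fun i => x i = -1).card *
      (univ.filter fun j => y j = 1).card *
      (univ.filter fun j => y j = -1).card := by
  rw [mul_assoc _ _ (univ.filter fun j => y j = -1).card, ← pair_count_aux n x hx,
    ← pair_count_aux n y hy, ← card_product]
  unfold type1SwitcherCount
  refine card_bij' (fun p _ => ((p.1, p.2.1), p.2.2)) (fun q _ => (q.1.1, q.1.2, q.2)) ?_ ?_ ?_ ?_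
  · rintro ⟨a, c, b, d⟩ h
    simp only [mem_filter, mem_univ, true_and, mem_product] at h ⊢
    obtain ⟨h1, h2, -, h4⟩ := h
    refine ⟨⟨h1, fun e => h4 ?_⟩, h2, fun e => h4 ?_⟩
    · rw [e]; ring
    · rw [e]
  · rintro ⟨⟨a, c⟩, b, d⟩ h
    simp only [mem_filter, mem_univ, true_and, mem_product] at h ⊢
    obtain ⟨⟨h1, h2⟩, h3, h4⟩ := h
    refine ⟨h1, h3, ?_, fun e => ?_⟩
    · rcases hx a with ha | ha <;> rcases hx c with hc | hc <;>
        rcases hy b with hb | hb <;> rcases hy d with hd | hd <;> simp [ha, hc, hb, hd]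
    · have : (x a - x c) * (y b - y d) = 0 := by linarith
      rcases mul_eq_zero.mp this with h | h
      · exact h2 (sub_eq_zero.mp h)
      · exact h4 (sub_eq_zero.mp h)
  · intro p _; rfl
  · intro q _; rfl
end

section
/- Let 0 < α ≤ 1/100 be real, let M be a signing of K_{n,n} with disc(M) ≤ α/3, and let x, y : Fin n → ℤ be vectors with all entries ±1 such that the number of pairs (i, j) with M i j ≠ x i · y j is at most 2·α·n². If the number of indices i with x i = 1 is at least (1 − 3·√α)·n, then |y⁺ − y⁻| ≤ 12·α·n, where y⁺ and y⁻ are the numbers of +1 and −1 entries of y. -/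
open Finset

/-- The total discrepancy of the signing `M`. -/
noncomputable def totalDisc (n : ℕ) (M : Fin n → Fin n → ℤ) : ℝ :=
  |(∑ i, ∑ j, (M i j : ℝ))| / n ^ 2

/-- The sum of a sign vector is the number of `+1`s minus the number of `-1`s. -/
lemma sum_sign_eq {n : ℕ} (y : Fin n → ℤ) (hy : ∀ j, y j = 1 ∨ y j = -1) :
    (∑ j, (y j : ℝ)) = ((univ.filter fun j => y j = 1).card : ℝ) -
      ((univ.filter fun j => y j = -1).card : ℝ) := by
  rw [Finset.card_filter, Finset.card_filter]
  push_cast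
  rw [← Finset.sum_sub_distrib]
  refine Finset.sum_congr rfl fun j _ => ?_
  rcases hy j with h | h <;> norm_num [h]

lemma card_sign_eq {n : ℕ} (y : Fin n → ℤ) (hy : ∀ j, y j = 1 ∨ y j = -1) :
    ((univ.filter fun j => y j = 1).card : ℝ) +
      ((univ.filter fun j => y j = -1).card : ℝ) = n := by
  rw [Finset.card_filter, Finset.card_filter]
  push_cast
  rw [← Finset.sum_add_distrib]
  have : ∀ j ∈ (univ : Finset (Fin n)),
      ((if y j = 1 then (1 : ℝ) else 0) + if y j = -1 then (1 : ℝ) else 0) = 1 := by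
    intro j _
    rcases hy j with h | h <;> norm_num [h]
  rw [Finset.sum_congr rfl this]
  simp

lemma diff_le {n : ℕ} (M : Fin n → Fin n → ℤ) (hM : IsSigning n M) (x y : Fin n → ℤ)
    (hx : ∀ i, x i = 1 ∨ x i = -1) (hy : ∀ j, y j = 1 ∨ y j = -1) :
    |(∑ i, ∑ j, (M i j : ℝ)) - (∑ i, (x i : ℝ)) * ∑ j, (y j : ℝ)| ≤
      2 * (((univ ×ˢ univ).filter fun p : Fin n × Fin n =>
        M p.1 p.2 ≠ x p.1 * y p.2).card : ℝ) := by
  rw [Finset.sum_mul_sum, ← Finset.sum_product', ← Finset.sum_product',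
    ← Finset.sum_sub_distrib, Finset.card_filter]
  push_cast
  rw [Finset.mul_sum]
  refine (Finset.abs_sum_le_sum_abs _ _).trans (Finset.sum_le_sum fun p _ => ?_)
  rcases hM p.1 p.2 with h | h <;> rcases hx p.1 with h1 | h1 <;>
    rcases hy p.2 with h2 | h2 <;> norm_num [h, h1, h2]

theorem other_side_nearly_balanced (n : ℕ) (α : ℝ) (hα : 0 < α)
    (hα' : α ≤ 1 / 100) (M : Fin n → Fin n → ℤ) (hM : IsSigning n M)
    (hdisc : totalDisc n M ≤ α / 3)
    (x y : Fin n → ℤ)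
    (hx : ∀ i, x i = 1 ∨ x i = -1) (hy : ∀ j, y j = 1 ∨ y j = -1)
    (hclose : (((univ ×ˢ univ).filter fun p : Fin n × Fin n =>
        M p.1 p.2 ≠ x p.1 * y p.2).card : ℝ) ≤ 2 * α * n ^ 2)
    (hxplus : (((univ.filter fun i => x i = 1).card : ℝ)) ≥
        (1 - 3 * Real.sqrt α) * n) :
    |((univ.filter fun j => y j = 1).card : ℝ) -
      ((univ.filter fun j => y j = -1).card : ℝ)| ≤ 12 * α * n := by
  have hY := sum_sign_eq y hy
  have hX := sum_sign_eq x hx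
  have hXc := card_sign_eq x hx
  have hYc := card_sign_eq y hy
  have hd := diff_le M hM x y hx hy
  rw [← hY]
  rcases Nat.eq_zero_or_pos n with h0 | hpos
  · subst h0
    simp
  have hn : (0 : ℝ) < n := by exact_mod_cast hpos
  have hs : Real.sqrt α ≤ 1 / 10 := by
    rw [Real.sqrt_le_left (by norm_num)]
    linarith
  unfold totalDisc at hdisc
  rw [div_le_iff₀ (by positivity)] at hdisc
  have hXl : (2 / 5 : ℝ) * n ≤ ∑ i, (x i : ℝ) := by
    have := mul_le_mul_of_nonneg_right hs hn.le
    rw [hX]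
    linarith
  generalize (∑ i, (x i : ℝ)) = X at *
  generalize (∑ j, (y j : ℝ)) = Y at *
  generalize (∑ i, ∑ j, (M i j : ℝ)) = S at *
  have hXY : |X * Y| ≤ 13 / 3 * α * n ^ 2 := by
    have h1 := abs_sub_abs_le_abs_sub (X * Y) S
    rw [abs_sub_comm] at h1
    linarith
  rw [abs_mul] at hXY
  have h2 : 2 / 5 * n * |Y| ≤ |X| * |Y| :=
    mul_le_mul_of_nonneg_right (hXl.trans (le_abs_self X)) (abs_nonneg Y)
  have h3 : (n : ℝ) * |Y| ≤ n * (65 / 6 * α * n) := by nlinarith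
  have h4 := le_of_mul_le_mul_left h3 hn
  have h5 : 0 < α * n := by positivity
  linarith
end
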